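/- Smoothing family adapted to the strip Ω (Corollary A.5): Let d ≥ 1 and Ω := {(x,y) ∈ ℝ^d×ℝ^d : |x−y| ≤ 2}; for k ∈ {0,1,2,3} let F_k denote the set of functions in W^{k,∞}(ℝ^d×ℝ^d) vanishing outside Ω. Let ρ : ℝ^d → ℝ be smooth, nonnegative, even, supported in the closed unit ball with ∫ρ = 1, and ρ_η(x) := η^{−d}ρ(x/η). Let (θ_η)_{η∈(0,1)} be smooth compactly supported functions on ℝ with 0 ≤ θ_η ≤ 1, θ_η(s) = 0 for |s| ≥ 1 − 2η, θ_η(s) = 1 for |s| ≤ 1 − 3η, and |θ_η^{(j)}| ≤ C₀·η^{−j} for j = 1,2,3; set Θ_η(x) := θ_η(|x|²) for x ∈ ℝ^d. For Φ : ℝ^d×ℝ^d → ℝ define (J_ηΦ)(x,y) := ∫∫_{ℝ^d×ℝ^d} Φ(x'_+ + x'_−, x'_+ − x'_−)·Θ_η(x'_−)·ρ_η((x+y)/2 − x'_+)·ρ_η((x−y)/2 − x'_−) dx'_+ dx'_−. Then: (J1) for every Φ ∈ F_0, J_ηΦ is smooth and vanishes outside Ω, so J_η(F_k) ⊆ F_3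 for all k ≤ 3; moreover there is a constant C, depending only on d, ρ and C₀, such that for all η ∈ (0,1): (J2) ‖J_ηΦ‖_{W^{ℓ,∞}} ≤ C·η^{−(ℓ−k)}·‖Φ‖_{W^{k,∞}} whenever Φ ∈ F_k, 0 ≤ k ≤ ℓ ≤ 3 and ℓ−k ≤ 2; (J3) ‖Φ − J_ηΦ‖_{W^{ℓ,∞}} ≤ C·η^{k−ℓ}·‖Φ‖_{W^{k,∞}} whenever Φ ∈ F_k, 0 ≤ ℓ ≤ k ≤ 3 and k−ℓ ≤ 2. -/

import Mathlib

open MeasureTheory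
open scoped NNReal

/-- `ψ ∈ W^{k,∞}` with `‖ψ‖_{W^{k,∞}} ≤ A`. -/
def WBound {E : Type*} [NormedAddCommGroup E] [NormedSpace ℝ E]
    [MeasurableSpace E] (k : ℕ) (A : ℝ) (ψ : E → ℝ) : Prop :=
  match k with
  | 0 => Measurable ψ ∧ ∀ x, |ψ x| ≤ A
  | (m + 1) =>
      ContDiff ℝ m ψ ∧ (∀ j ≤ m, ∀ x, ‖iteratedFDeriv ℝ j ψ x‖ ≤ A) ∧
      LipschitzWith A.toNNReal (iteratedFDeriv ℝ m ψ)

/-- The smoothing operator adapted to the strip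
`Ω = {(x,y) : |x−y| ≤ 2}`:
`(J_ηΦ)(x,y) = ∫∫ Φ(x'_+ + x'_−, x'_+ − x'_−) Θ_η(x'_−)
ρ_η((x+y)/2 − x'_+) ρ_η((x−y)/2 − x'_−) dx'_+ dx'_−`. -/
noncomputable def stripSmoothing {d : ℕ} (ρ : EuclideanSpace ℝ (Fin d) → ℝ)
    (θ : ℝ → ℝ) (η : ℝ)
    (Φ : EuclideanSpace ℝ (Fin d) × EuclideanSpace ℝ (Fin d) → ℝ)
    (p : EuclideanSpace ℝ (Fin d) × EuclideanSpace ℝ (Fin d)) : ℝ :=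
  ∫ xp : EuclideanSpace ℝ (Fin d), ∫ xm : EuclideanSpace ℝ (Fin d),
    Φ (xp + xm, xp - xm) * θ (‖xm‖ ^ 2) *
      ((η ^ d)⁻¹ * ρ (η⁻¹ • ((2 : ℝ)⁻¹ • (p.1 + p.2) - xp))) *
      ((η ^ d)⁻¹ * ρ (η⁻¹ • ((2 : ℝ)⁻¹ • (p.1 - p.2) - xm)))

open scoped ContDiff Convolution fwdDiff

/-!
In the coordinates `((x + y) / 2, (x - y) / 2)` the operator is `J_η Φ = T (Θ Φ)`, where `T` is
convolution with a smooth even probability density at scale `η`. Since `T` commutes with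
derivatives and translations, it gains a factor `η⁻¹` for each derivative moved onto the kernel,
and by evenness `g - T g` is an average of second differences of `g`, hence second order accurate.

The other error term `(1 - Θ) Φ` lives within `O(η)` of points near which `Φ` vanishes identically,
so the Taylor flatness of `Φ` there pays for the factors `η⁻¹` produced by differentiating `Θ`.

Membership in `W^{m+1,∞}` is equivalent to `C^m` bounds on `ψ` together with `C^m` bounds of size
`A ‖v‖` on the forward differences `Δ_[v] ψ`. Hence every translation invariant `C^m` estimate
lifts to `W^{m+1,∞}` without differentiating the Lipschitz top derivative.
-/

section FwdDiff

variable {M G : Type*} [AddCommMonoid M]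

theorem fwdDiff_mul [CommRing G] (f g : M → G) (v : M) :
    Δ_[v] (f * g) = f * Δ_[v] g + Δ_[v] f * fun x ↦ g (x + v) := by
  funext x
  simp only [fwdDiff, Pi.mul_apply, Pi.add_apply]
  ring

theorem fwdDiff_sub [AddCommGroup G] (f g : M → G) (v : M) :
    Δ_[v] (f - g) = Δ_[v] f - Δ_[v] g :=
  map_sub (fwdDiff_aux.fwdDiffₗ M G v) f g

theorem fwdDiff_commute [AddCommGroup G] (v w : M) :
    Function.Commute (fwdDiff v : (M → G) → M → G) (fwdDiff w) := by
  intro f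
  funext x
  simp only [fwdDiff, add_right_comm x v w]
  abel

theorem norm_fwdDiff_iterate_add_le [SeminormedAddCommGroup G] {f : M → G} {v : M} {i : ℕ} {c : ℝ}
    (h : ∀ x, ‖(Δ_[v])^[i] f x‖ ≤ c) (n : ℕ) (x : M) : ‖(Δ_[v])^[n + i] f x‖ ≤ 2 ^ n * c := by
  induction n generalizing x with
  | zero => simpa using h x
  | succ n ih =>
    rw [add_right_comm, Function.iterate_succ_apply']
    calc ‖(Δ_[v])^[n + i] f (x + v) - (Δ_[v])^[n + i] f x‖ ≤ 2 ^ n * c + 2 ^ n * c :=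
          norm_sub_le_of_le (ih _) (ih _)
      _ = 2 ^ (n + 1) * c := by ring

theorem lipschitzWith_toNNReal_iff_norm_fwdDiff_le {V F : Type*} [SeminormedAddCommGroup V]
    [SeminormedAddCommGroup F] {f : V → F} {A : ℝ} (hA : 0 ≤ A) :
    LipschitzWith A.toNNReal f ↔ ∀ v x, ‖Δ_[v] f x‖ ≤ A * ‖v‖ := by
  rw [lipschitzWith_iff_norm_sub_le, Real.coe_toNNReal _ hA]
  exact ⟨fun h v x ↦ by simpa [fwdDiff] using h (x + v) x,
    fun h x y ↦ by simpa [fwdDiff] using h (x - y) y⟩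

end FwdDiff

section Derivatives

variable {V F : Type*} [NormedAddCommGroup V] [NormedSpace ℝ V]
  [NormedAddCommGroup F] [NormedSpace ℝ F]

theorem norm_iteratedFDeriv_iteratedFDeriv (i m : ℕ) (f : V → F) (x : V) :
    ‖iteratedFDeriv ℝ i (iteratedFDeriv ℝ m f) x‖ = ‖iteratedFDeriv ℝ (i + m) f x‖ := by
  induction m generalizing i with
  | zero =>
    rw [iteratedFDeriv_zero_eq_comp, LinearIsometryEquiv.norm_iteratedFDeriv_comp_left, add_zero]
  | succ m ih =>
    calc ‖iteratedFDeriv ℝ i (iteratedFDeriv ℝ (m + 1) f) x‖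
        = ‖iteratedFDeriv ℝ i (fderiv ℝ (iteratedFDeriv ℝ m f)) x‖ := by
          rw [fderiv_iteratedFDeriv, LinearIsometryEquiv.norm_iteratedFDeriv_comp_left]
      _ = ‖iteratedFDeriv ℝ (i + (m + 1)) f x‖ := by
          rw [norm_iteratedFDeriv_fderiv, ih, add_right_comm, add_assoc]

theorem norm_fwdDiff_le_of_norm_fderiv_le {f : V → F} (hf : Differentiable ℝ f) {C : ℝ}
    (hC : ∀ x, ‖fderiv ℝ f x‖ ≤ C) (v x : V) : ‖Δ_[v] f x‖ ≤ C * ‖v‖ := by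
  simpa [fwdDiff] using convex_univ.norm_image_sub_le_of_norm_fderiv_le (𝕜 := ℝ) (fun z _ ↦ hf z)
    (fun z _ ↦ hC z) (Set.mem_univ x) (Set.mem_univ (x + v))

theorem contDiff_fwdDiff {n : ℕ∞ω} {f : V → F} (hf : ContDiff ℝ n f) (v : V) :
    ContDiff ℝ n (Δ_[v] f) := by
  unfold fwdDiff
  fun_prop

theorem iteratedFDeriv_fwdDiff {j : ℕ} {f : V → F} (hf : ContDiff ℝ j f) (v : V) :
    iteratedFDeriv ℝ j (Δ_[v] f) = Δ_[v] (iteratedFDeriv ℝ j f) := by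
  funext x
  unfold fwdDiff
  rw [fun_iteratedFDeriv_sub_apply (by fun_prop) hf.contDiffAt, iteratedFDeriv_comp_add_right]

theorem iteratedFDeriv_fwdDiff_iterate {j : ℕ} {f : V → F} (hf : ContDiff ℝ j f) (v : V) (i : ℕ) :
    iteratedFDeriv ℝ j ((Δ_[v])^[i] f) = (Δ_[v])^[i] (iteratedFDeriv ℝ j f) := by
  induction i generalizing f with
  | zero => rfl
  | succ i ih =>
    rw [Function.iterate_succ_apply, ih (contDiff_fwdDiff hf v), iteratedFDeriv_fwdDiff hf,
      Function.iterate_succ_apply]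

theorem norm_iteratedFDeriv_fwdDiff_le {j : ℕ} {f : V → F} (hf : ContDiff ℝ (j + 1 : ℕ) f) {C : ℝ}
    (hC : ∀ x, ‖iteratedFDeriv ℝ (j + 1) f x‖ ≤ C) (v x : V) :
    ‖iteratedFDeriv ℝ j (Δ_[v] f) x‖ ≤ C * ‖v‖ := by
  rw [iteratedFDeriv_fwdDiff (hf.of_le (by exact_mod_cast j.le_succ))]
  refine norm_fwdDiff_le_of_norm_fderiv_le (hf.differentiable_iteratedFDeriv
    (by exact_mod_cast j.lt_succ_self)) (fun y ↦ ?_) v x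
  rw [norm_fderiv_iteratedFDeriv]
  exact hC y

theorem norm_iteratedFDeriv_mul_le_two_pow {n : ℕ} {f g : V → ℝ} (hf : ContDiff ℝ n f)
    (hg : ContDiff ℝ n g) {x : V} {c : ℝ}
    (h : ∀ i ≤ n, ‖iteratedFDeriv ℝ i f x‖ * ‖iteratedFDeriv ℝ (n - i) g x‖ ≤ c) :
    ‖iteratedFDeriv ℝ n (fun y ↦ f y * g y) x‖ ≤ 2 ^ n * c := by
  calc ‖iteratedFDeriv ℝ n (fun y ↦ f y * g y) x‖
      ≤ ∑ i ∈ Finset.range (n + 1), (n.choose i : ℝ) * ‖iteratedFDeriv ℝ i f x‖ *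
          ‖iteratedFDeriv ℝ (n - i) g x‖ := norm_iteratedFDeriv_mul_le hf hg x le_rfl
    _ ≤ ∑ i ∈ Finset.range (n + 1), (n.choose i : ℝ) * c := by
        refine Finset.sum_le_sum fun i hi ↦ ?_
        rw [mul_assoc]
        exact mul_le_mul_of_nonneg_left (h i (Finset.mem_range_succ_iff.1 hi)) (Nat.cast_nonneg _)
    _ = 2 ^ n * c := by
        rw [← Finset.sum_mul]
        exact_mod_cast congrArg (fun s : ℕ ↦ (s : ℝ) * c) (Nat.sum_range_choose n)

theorem iteratedFDeriv_eq_zero_of_notMem_tsupport {f : V → F} {x : V} (hx : x ∉ tsupport f)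
    (j : ℕ) : iteratedFDeriv ℝ j f x = 0 :=
  Function.notMem_support.1 fun h ↦ hx (support_iteratedFDeriv_subset j h)

end Derivatives

section CBound

variable {V F : Type*} [NormedAddCommGroup V] [NormedSpace ℝ V]
  [NormedAddCommGroup F] [NormedSpace ℝ F]

/-- `f ∈ C^m` with all derivatives of order at most `m` bounded by `A`. Together with the same
bound for the difference quotients of `f` this describes `W^{m+1,∞}`, see `wBound_succ_iff`. -/
structure CBound (m : ℕ) (A : ℝ) (f : V → F) : Prop where
  contDiff : ContDiff ℝ m f
  norm_le : ∀ j ≤ m, ∀ x, ‖iteratedFDeriv ℝ j f x‖ ≤ A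

namespace CBound

variable {m n : ℕ} {A B : ℝ} {f g : V → F}

theorem nonneg (hf : CBound m A f) : 0 ≤ A :=
  (norm_nonneg _).trans (hf.norm_le 0 m.zero_le 0)

theorem norm_apply_le (hf : CBound m A f) (x : V) : ‖f x‖ ≤ A := by
  simpa using hf.norm_le 0 m.zero_le x

theorem of_le (hf : CBound m A f) (h : n ≤ m) : CBound n A f :=
  ⟨hf.contDiff.of_le (by exact_mod_cast h), fun j hj ↦ hf.norm_le j (hj.trans h)⟩

theorem mono (hf : CBound m A f) (h : A ≤ B) : CBound m B f :=
  ⟨hf.contDiff, fun j hj x ↦ (hf.norm_le j hj x).trans h⟩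

theorem add (hf : CBound m A f) (hg : CBound m B g) : CBound m (A + B) (f + g) where
  contDiff := hf.contDiff.add hg.contDiff
  norm_le j hj x := by
    have hj' : (j : ℕ∞ω) ≤ m := by exact_mod_cast hj
    rw [iteratedFDeriv_add (hf.contDiff.of_le hj') (hg.contDiff.of_le hj')]
    exact norm_add_le_of_le (hf.norm_le j hj x) (hg.norm_le j hj x)

theorem sub (hf : CBound m A f) (hg : CBound m B g) : CBound m (A + B) (f - g) where
  contDiff := hf.contDiff.sub hg.contDiff
  norm_le j hj x := by
    have hj' : (j : ℕ∞ω) ≤ m := by exact_mod_cast hj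
    rw [iteratedFDeriv_sub (hf.contDiff.of_le hj') (hg.contDiff.of_le hj')]
    exact norm_sub_le_of_le (hf.norm_le j hj x) (hg.norm_le j hj x)

theorem fwdDiff (hf : CBound (m + 1) A f) (v : V) : CBound m (A * ‖v‖) (Δ_[v] f) where
  contDiff := contDiff_fwdDiff (hf.of_le m.le_succ).contDiff v
  norm_le j hj x := norm_iteratedFDeriv_fwdDiff_le (hf.of_le (Nat.succ_le_succ hj)).contDiff
    (hf.norm_le (j + 1) (Nat.succ_le_succ hj)) v x

theorem comp_iteratedFDeriv (hf : CBound (m + n) A f) : CBound m A (iteratedFDeriv ℝ n f) where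
  contDiff := hf.contDiff.iteratedFDeriv_right le_rfl
  norm_le j hj x := by
    rw [norm_iteratedFDeriv_iteratedFDeriv]
    exact hf.norm_le _ (Nat.add_le_add_right hj n) x

end CBound

theorem wBound_succ_iff [MeasurableSpace V] {m : ℕ} {A : ℝ} {ψ : V → ℝ} :
    WBound (m + 1) A ψ ↔ CBound m A ψ ∧ ∀ v, CBound m (A * ‖v‖) (Δ_[v] ψ) := by
  constructor
  · rintro ⟨hψ, hle, hlip⟩
    have hC : CBound m A ψ := ⟨hψ, hle⟩
    refine ⟨hC, fun v ↦ ⟨contDiff_fwdDiff hψ v, fun j hj x ↦ ?_⟩⟩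
    rcases hj.eq_or_lt with rfl | hj
    · rw [iteratedFDeriv_fwdDiff hψ]
      exact (lipschitzWith_toNNReal_iff_norm_fwdDiff_le hC.nonneg).1 hlip v x
    · exact norm_iteratedFDeriv_fwdDiff_le (hC.of_le hj).contDiff (hle _ hj) v x
  · rintro ⟨hC, hΔ⟩
    refine ⟨hC.contDiff, hC.norm_le, (lipschitzWith_toNNReal_iff_norm_fwdDiff_le hC.nonneg).2 ?_⟩
    intro v x
    rw [← iteratedFDeriv_fwdDiff hC.contDiff]
    exact (hΔ v).norm_le m le_rfl x

end CBound

namespace WBound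

variable {V : Type*} [NormedAddCommGroup V] [NormedSpace ℝ V] [MeasurableSpace V]
  {k : ℕ} {A B : ℝ} {φ ψ : V → ℝ}

theorem abs_le (hψ : WBound k A ψ) (x : V) : |ψ x| ≤ A := by
  cases k with
  | zero => exact hψ.2 x
  | succ m => exact (wBound_succ_iff.1 hψ).1.norm_apply_le x

theorem nonneg (hψ : WBound k A ψ) : 0 ≤ A :=
  (abs_nonneg _).trans (hψ.abs_le 0)

theorem measurable [OpensMeasurableSpace V] (hψ : WBound k A ψ) : Measurable ψ := by
  cases k with
  | zero => exact hψ.1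
  | succ m => exact hψ.1.continuous.measurable

theorem mono (hψ : WBound k A ψ) (h : A ≤ B) : WBound k B ψ := by
  cases k with
  | zero => exact ⟨hψ.1, fun x ↦ (hψ.2 x).trans h⟩
  | succ m =>
    rw [wBound_succ_iff] at hψ ⊢
    exact ⟨hψ.1.mono h, fun v ↦ (hψ.2 v).mono (mul_le_mul_of_nonneg_right h (norm_nonneg v))⟩

theorem add (hφ : WBound k A φ) (hψ : WBound k B ψ) : WBound k (A + B) (φ + ψ) := by
  cases k with
  | zero => exact ⟨hφ.1.add hψ.1, fun x ↦ (abs_add_le _ _).trans (add_le_add (hφ.2 x) (hψ.2 x))⟩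
  | succ m =>
    rw [wBound_succ_iff] at hφ hψ ⊢
    refine ⟨hφ.1.add hψ.1, fun v ↦ ?_⟩
    rw [add_mul]
    exact (fwdDiff_add v φ ψ).symm ▸ (hφ.2 v).add (hψ.2 v)

theorem sub (hφ : WBound k A φ) (hψ : WBound k B ψ) : WBound k (A + B) (φ - ψ) := by
  cases k with
  | zero => exact ⟨hφ.1.sub hψ.1, fun x ↦ (abs_sub _ _).trans (add_le_add (hφ.2 x) (hψ.2 x))⟩
  | succ m =>
    rw [wBound_succ_iff] at hφ hψ ⊢
    refine ⟨hφ.1.sub hψ.1, fun v ↦ ?_⟩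
    rw [add_mul, fwdDiff_sub]
    exact (hφ.2 v).sub (hψ.2 v)

end WBound

theorem CBound.wBound {V : Type*} [NormedAddCommGroup V] [NormedSpace ℝ V] [MeasurableSpace V]
    [OpensMeasurableSpace V] {k : ℕ} {A : ℝ} {ψ : V → ℝ} (hψ : CBound k A ψ) : WBound k A ψ := by
  cases k with
  | zero => exact ⟨hψ.contDiff.continuous.measurable, hψ.norm_apply_le⟩
  | succ m => exact wBound_succ_iff.2 ⟨hψ.of_le m.le_succ, hψ.fwdDiff⟩

theorem WBound.fwdDiff_iterate {V : Type*} [NormedAddCommGroup V] [NormedSpace ℝ V]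
    [MeasurableSpace V] [OpensMeasurableSpace V] {k i : ℕ} {A : ℝ} {ψ : V → ℝ}
    (hψ : WBound (k + i) A ψ) (v : V) : WBound k (A * ‖v‖ ^ i) ((Δ_[v])^[i] ψ) := by
  induction i generalizing A ψ with
  | zero => simpa using hψ
  | succ i ih =>
    rw [Function.iterate_succ_apply, pow_succ', ← mul_assoc]
    exact ih ((wBound_succ_iff.1 hψ).2 v).wBound

section Flat

variable {V : Type*} [NormedAddCommGroup V] [NormedSpace ℝ V] [MeasurableSpace V]
  {A r : ℝ} {Φ : V → ℝ} {n i j : ℕ} {q x y : V}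

theorem WBound.norm_iteratedFDeriv_sub_le_of_flat (hΦ : WBound (n + 1) A Φ) (hr : 0 ≤ r)
    (hq : ∀ j, iteratedFDeriv ℝ j Φ q = 0) (hij : i + j = n)
    (hx : x ∈ Metric.closedBall q r) (hy : y ∈ Metric.closedBall q r) :
    ‖iteratedFDeriv ℝ j Φ x - iteratedFDeriv ℝ j Φ y‖ ≤ A * r ^ i * ‖x - y‖ := by
  obtain ⟨hC, hΔ⟩ := wBound_succ_iff.1 hΦ
  induction i generalizing j x y with
  | zero =>
    obtain rfl : j = n := by omega
    simpa [iteratedFDeriv_fwdDiff hC.contDiff, fwdDiff] using (hΔ (x - y)).norm_le j le_rfl y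
  | succ i ih =>
    refine (convex_closedBall q r).norm_image_sub_le_of_norm_fderiv_le (𝕜 := ℝ)
      (fun z _ ↦ hC.contDiff.differentiable_iteratedFDeriv (by norm_cast; omega) z)
      (fun z hz ↦ ?_) hy hx
    have hz' : ‖z - q‖ ≤ r := mem_closedBall_iff_norm.1 hz
    have := ih (j := j + 1) (by omega) hz (Metric.mem_closedBall_self hr)
    rw [hq, sub_zero] at this
    rw [norm_fderiv_iteratedFDeriv, pow_succ, ← mul_assoc]
    exact this.trans (mul_le_mul_of_nonneg_left hz' (mul_nonneg hΦ.nonneg (pow_nonneg hr i)))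

theorem WBound.norm_iteratedFDeriv_le_of_flat (hΦ : WBound (n + 1) A Φ) (hr : 0 ≤ r)
    (hq : ∀ j, iteratedFDeriv ℝ j Φ q = 0) (hij : i + j = n) (hx : x ∈ Metric.closedBall q r) :
    ‖iteratedFDeriv ℝ j Φ x‖ ≤ A * r ^ i * r := by
  have h := hΦ.norm_iteratedFDeriv_sub_le_of_flat hr hq hij hx (Metric.mem_closedBall_self hr)
  rw [hq, sub_zero] at h
  exact h.trans (mul_le_mul_of_nonneg_left (mem_closedBall_iff_norm.1 hx)
    (mul_nonneg hΦ.nonneg (pow_nonneg hr i)))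

end Flat

theorem two_pow_mul_rescaled_le {A B c η : ℝ} {n j d e : ℕ} (hA : 0 ≤ A) (hB : 0 ≤ B)
    (hη : 0 < η) (hη1 : η ≤ 1) (hc : 1 ≤ c) (hj : j ≤ n + 1) (hde : d ≤ e) (hen : e ≤ n) :
    2 ^ j * (B * c ^ n * A * (c * η) ^ e) ≤ 2 ^ (n + 1) * B * c ^ (2 * n) * η ^ d * A :=
  calc 2 ^ j * (B * c ^ n * A * (c * η) ^ e) = 2 ^ j * B * (c ^ n * c ^ e) * η ^ e * A := by ring
    _ ≤ 2 ^ (n + 1) * B * (c ^ n * c ^ n) * η ^ d * A := by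
      have := pow_le_pow_of_le_one hη.le hη1 hde
      gcongr
      exact one_le_two
    _ = 2 ^ (n + 1) * B * c ^ (2 * n) * η ^ d * A := by ring

section Cutoff

variable {V : Type*} [NormedAddCommGroup V] [NormedSpace ℝ V]

/-- `χ` varies at the length scale `δ`: its derivatives of order `j ≤ n` are at most `B δ⁻ʲ`. -/
structure ScaleBound (n : ℕ) (B δ : ℝ) (χ : V → ℝ) : Prop where
  contDiff : ContDiff ℝ n χ
  norm_le : ∀ j ≤ n, ∀ x, ‖iteratedFDeriv ℝ j χ x‖ ≤ B * (δ ^ j)⁻¹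

variable {A B δ c η : ℝ} {Φ χ : V → ℝ} {n j k l a : ℕ} {x v : V}

theorem ScaleBound.nonneg (hχ : ScaleBound n B δ χ) : 0 ≤ B := by
  simpa using (norm_nonneg _).trans (hχ.norm_le 0 n.zero_le 0)

theorem ScaleBound.abs_le (hχ : ScaleBound n B δ χ) (x : V) : |χ x| ≤ B := by
  simpa using hχ.norm_le 0 n.zero_le x

theorem ScaleBound.of_le (hχ : ScaleBound n B δ χ) (h : k ≤ n) : ScaleBound k B δ χ :=
  ⟨hχ.contDiff.of_le (by exact_mod_cast h), fun j hj ↦ hχ.norm_le j (hj.trans h)⟩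

theorem ScaleBound.rescale (hχ : ScaleBound n B δ χ) (hc : 1 ≤ c) (hδ : 0 < δ) :
    ScaleBound n (B * c ^ n) (c * δ) χ where
  contDiff := hχ.contDiff
  norm_le j hj x := by
    have hB := hχ.nonneg
    calc ‖iteratedFDeriv ℝ j χ x‖ ≤ B * (δ ^ j)⁻¹ := hχ.norm_le j hj x
      _ = B * c ^ j * ((c * δ) ^ j)⁻¹ := by
        rw [mul_pow]
        field_simp
      _ ≤ B * c ^ n * ((c * δ) ^ j)⁻¹ := by gcongr

theorem exists_flat_point_of_mem_tsupport (hδ : 0 < δ)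
    (hsupp : tsupport χ ⊆ Metric.thickening (δ / 2) (tsupport Φ)ᶜ) (hx : x ∈ tsupport χ)
    (hv : ‖v‖ ≤ δ / 2) : ∃ q, (∀ j, iteratedFDeriv ℝ j Φ q = 0) ∧
      x ∈ Metric.closedBall q δ ∧ x + v ∈ Metric.closedBall q δ := by
  obtain ⟨q, hq, hxq⟩ := Metric.mem_thickening_iff.1 (hsupp hx)
  rw [dist_eq_norm] at hxq
  refine ⟨q, iteratedFDeriv_eq_zero_of_notMem_tsupport hq, ?_, ?_⟩ <;>
    rw [mem_closedBall_iff_norm]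
  · linarith
  · rw [add_sub_right_comm]
    linarith [norm_add_le (x - q) v]

variable [MeasurableSpace V]

theorem norm_iteratedFDeriv_cutoff_mul_le (hΦ : WBound (a + j + 1) A Φ)
    (hχ : ScaleBound (a + j + 1) B δ χ) (hδ : 0 < δ)
    (hsupp : tsupport χ ⊆ Metric.thickening (δ / 2) (tsupport Φ)ᶜ) (x : V) :
    ‖iteratedFDeriv ℝ j (χ * Φ) x‖ ≤ 2 ^ j * (B * A * δ ^ (a + 1)) := by
  have hA := hΦ.nonneg
  have hB := hχ.nonneg
  refine norm_iteratedFDeriv_mul_le_two_pow (hχ.of_le (by omega)).contDiff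
    ((wBound_succ_iff.1 hΦ).1.of_le (by omega)).contDiff fun i hi ↦ ?_
  by_cases hx : x ∈ tsupport χ
  · obtain ⟨q, hq, hxq, -⟩ := exists_flat_point_of_mem_tsupport hδ hsupp hx (v := 0)
      (by simpa using (half_pos hδ).le)
    calc _ ≤ B * (δ ^ i)⁻¹ * (A * δ ^ (a + i) * δ) := mul_le_mul (hχ.norm_le i (by omega) x)
          (hΦ.norm_iteratedFDeriv_le_of_flat hδ.le hq (by omega) hxq) (norm_nonneg _)
          (by positivity)
      _ = B * A * δ ^ (a + 1) := by
          field_simp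
          ring
  · rw [iteratedFDeriv_eq_zero_of_notMem_tsupport hx, norm_zero, zero_mul]
    positivity

theorem norm_iteratedFDeriv_cutoff_mul_fwdDiff_le (hΦ : WBound (a + j + 1) A Φ)
    (hχ : ScaleBound (a + j + 1) B δ χ) (hδ : 0 < δ)
    (hsupp : tsupport χ ⊆ Metric.thickening (δ / 2) (tsupport Φ)ᶜ) (hv : ‖v‖ ≤ δ / 2) (x : V) :
    ‖iteratedFDeriv ℝ j (χ * Δ_[v] Φ) x‖ ≤ 2 ^ j * (B * A * δ ^ a * ‖v‖) := by
  have hA := hΦ.nonneg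
  have hB := hχ.nonneg
  have hΦs := (wBound_succ_iff.1 hΦ).1
  refine norm_iteratedFDeriv_mul_le_two_pow (hχ.of_le (by omega)).contDiff
    (contDiff_fwdDiff (hΦs.of_le (by omega)).contDiff v) fun i hi ↦ ?_
  by_cases hx : x ∈ tsupport χ
  · obtain ⟨q, hq, hxq, hxvq⟩ := exists_flat_point_of_mem_tsupport hδ hsupp hx hv
    have hΔ := hΦ.norm_iteratedFDeriv_sub_le_of_flat hδ.le hq (i := a + i) (j := j - i) (by omega)
      hxvq hxq
    rw [add_sub_cancel_left] at hΔ
    rw [iteratedFDeriv_fwdDiff (hΦs.of_le (by omega)).contDiff]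
    calc _ ≤ B * (δ ^ i)⁻¹ * (A * δ ^ (a + i) * ‖v‖) :=
          mul_le_mul (hχ.norm_le i (by omega) x) hΔ (norm_nonneg _) (by positivity)
      _ = B * A * δ ^ a * ‖v‖ := by
          field_simp
          ring
  · rw [iteratedFDeriv_eq_zero_of_notMem_tsupport hx, norm_zero, zero_mul]
    positivity

theorem norm_iteratedFDeriv_fwdDiff_cutoff_mul_le (hΦ : WBound (a + j + 1) A Φ)
    (hχ : ScaleBound (a + j + 1) B δ χ) (hδ : 0 < δ)
    (hsupp : tsupport χ ⊆ Metric.thickening (δ / 2) (tsupport Φ)ᶜ) (hv : ‖v‖ ≤ δ / 2) (x : V) :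
    ‖iteratedFDeriv ℝ j (Δ_[v] χ * fun y ↦ Φ (y + v)) x‖ ≤ 2 ^ j * (B * A * δ ^ a * ‖v‖) := by
  have hA := hΦ.nonneg
  have hB := hχ.nonneg
  have hΦs : ContDiff ℝ j Φ := ((wBound_succ_iff.1 hΦ).1.of_le (by omega)).contDiff
  refine norm_iteratedFDeriv_mul_le_two_pow (contDiff_fwdDiff (hχ.of_le (by omega)).contDiff v)
    (by fun_prop) fun i hi ↦ ?_
  rw [iteratedFDeriv_comp_add_right]
  by_cases hx : x ∈ tsupport χ ∨ x + v ∈ tsupport χ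
  · obtain ⟨q, hq, hxq⟩ : ∃ q, (∀ j, iteratedFDeriv ℝ j Φ q = 0) ∧
        x + v ∈ Metric.closedBall q δ := by
      rcases hx with hx | hx <;>
        obtain ⟨q, hq, h, h'⟩ := exists_flat_point_of_mem_tsupport hδ hsupp hx hv
      exacts [⟨q, hq, h'⟩, ⟨q, hq, h⟩]
    calc _ ≤ B * (δ ^ (i + 1))⁻¹ * ‖v‖ * (A * δ ^ (a + i) * δ) := by
          refine mul_le_mul (norm_iteratedFDeriv_fwdDiff_le (hχ.of_le (by omega)).contDiff
            (hχ.norm_le (i + 1) (by omega)) v x) ?_ (norm_nonneg _) (by positivity)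
          exact hΦ.norm_iteratedFDeriv_le_of_flat hδ.le hq (by omega) hxq
      _ = B * A * δ ^ a * ‖v‖ := by
          field_simp
          ring
  · rw [not_or] at hx
    rw [iteratedFDeriv_fwdDiff (hχ.of_le (by omega)).contDiff, fwdDiff,
      iteratedFDeriv_eq_zero_of_notMem_tsupport hx.1,
      iteratedFDeriv_eq_zero_of_notMem_tsupport hx.2, sub_zero, norm_zero, zero_mul]
    positivity

theorem norm_iteratedFDeriv_fwdDiff_mul_le (hΦ : WBound (a + j + 1) A Φ)
    (hχ : ScaleBound (a + j + 1) B δ χ) (hδ : 0 < δ)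
    (hsupp : tsupport χ ⊆ Metric.thickening (δ / 2) (tsupport Φ)ᶜ) (v x : V) :
    ‖iteratedFDeriv ℝ j (Δ_[v] (χ * Φ)) x‖ ≤ 2 ^ (j + 2) * (B * A * δ ^ a * ‖v‖) := by
  have hA := hΦ.nonneg
  have hB := hχ.nonneg
  have hχs : ContDiff ℝ j χ := (hχ.of_le (by omega)).contDiff
  have hΦs : ContDiff ℝ j Φ := ((wBound_succ_iff.1 hΦ).1.of_le (by omega)).contDiff
  rcases le_total ‖v‖ (δ / 2) with hv | hv
  · have hleft : ContDiff ℝ j (χ * Δ_[v] Φ) := hχs.mul (contDiff_fwdDiff hΦs v)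
    have hright : ContDiff ℝ j (Δ_[v] χ * fun y ↦ Φ (y + v)) :=
      (contDiff_fwdDiff hχs v).mul (by fun_prop)
    rw [fwdDiff_mul, iteratedFDeriv_add hleft hright]
    refine (norm_add_le_of_le (norm_iteratedFDeriv_cutoff_mul_fwdDiff_le hΦ hχ hδ hsupp hv x)
      (norm_iteratedFDeriv_fwdDiff_cutoff_mul_le hΦ hχ hδ hsupp hv x)).trans ?_
    rw [← two_mul, ← mul_assoc, ← pow_succ']
    gcongr <;> norm_num
  · rw [iteratedFDeriv_fwdDiff (f := χ * Φ) (hχs.mul hΦs)]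
    calc _ ≤ 2 ^ j * (B * A * δ ^ (a + 1)) + 2 ^ j * (B * A * δ ^ (a + 1)) :=
          norm_sub_le_of_le (norm_iteratedFDeriv_cutoff_mul_le hΦ hχ hδ hsupp _)
            (norm_iteratedFDeriv_cutoff_mul_le hΦ hχ hδ hsupp _)
      _ = 2 ^ (j + 2) * (B * A * δ ^ a * (δ / 2)) := by ring
      _ ≤ 2 ^ (j + 2) * (B * A * δ ^ a * ‖v‖) := by gcongr

theorem WBound.cutoff_mul [OpensMeasurableSpace V] (hΦ : WBound k A Φ)
    (hχ : ScaleBound n B η χ) (hη : 0 < η) (hη1 : η ≤ 1) (hc : 1 ≤ c)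
    (hsupp : tsupport χ ⊆ Metric.thickening (c * η / 2) (tsupport Φ)ᶜ) (hlk : l ≤ k)
    (hkn : k ≤ n) : WBound l (2 ^ (n + 1) * B * c ^ (2 * n) * η ^ (k - l) * A) (χ * Φ) := by
  have hB := hχ.nonneg
  have hδ : 0 < c * η := by positivity
  have hconst {j e : ℕ} := two_pow_mul_rescaled_le (j := j) (e := e) (d := k - l) (n := n)
    hΦ.nonneg hB hη hη1 hc
  cases k with
  | zero =>
    obtain rfl : l = 0 := by omega
    refine ⟨hχ.contDiff.continuous.measurable.mul hΦ.1, fun x ↦ ?_⟩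
    calc |χ x * Φ x| ≤ B * c ^ n * A := by
          rw [abs_mul]
          refine mul_le_mul ((hχ.abs_le x).trans ?_) (hΦ.abs_le x) (abs_nonneg _) (by positivity)
          exact le_mul_of_one_le_right hB (one_le_pow₀ hc)
      _ ≤ _ := by simpa using hconst (j := 0) (e := 0) (by omega) le_rfl (by omega)
  | succ k =>
    have hsmooth : ContDiff ℝ k (χ * Φ) :=
      (hχ.of_le (by omega)).contDiff.mul (wBound_succ_iff.1 hΦ).1.contDiff
    have hχ' := (hχ.rescale hc hη).of_le hkn
    have hD {j : ℕ} (hjk : j ≤ k) (hjl : j ≤ l) (x : V) :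
        ‖iteratedFDeriv ℝ j (χ * Φ) x‖ ≤
          2 ^ (n + 1) * B * c ^ (2 * n) * η ^ (k + 1 - l) * A := by
      obtain ⟨a, rfl⟩ := Nat.exists_eq_add_of_le' hjk
      exact (norm_iteratedFDeriv_cutoff_mul_le hΦ hχ' hδ hsupp x).trans
        (hconst (by omega) (by omega) (by omega))
    cases l with
    | zero => exact ⟨hsmooth.continuous.measurable, fun x ↦ by simpa using hD k.zero_le le_rfl x⟩
    | succ m =>
      have hmk : m ≤ k := Nat.le_of_succ_le_succ hlk
      have hsmooth' : ContDiff ℝ m (χ * Φ) := hsmooth.of_le (by exact_mod_cast hmk)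
      refine wBound_succ_iff.2 ⟨⟨hsmooth', fun j hj x ↦ hD (by omega) (by omega) x⟩,
        fun v ↦ ⟨contDiff_fwdDiff hsmooth' v, fun j hj x ↦ ?_⟩⟩
      obtain ⟨a, rfl⟩ := Nat.exists_eq_add_of_le' (hj.trans hmk)
      refine (norm_iteratedFDeriv_fwdDiff_mul_le hΦ hχ' hδ hsupp v x).trans ?_
      rw [← mul_assoc]
      exact mul_le_mul_of_nonneg_right (hconst (by omega) (by omega) (by omega)) (norm_nonneg v)

end Cutoff

section Convolution

variable {V E₁ E₁' F F' F₁ : Type*} [NormedAddCommGroup V]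
  [MeasurableSpace V] {μ : Measure V}
  [NormedAddCommGroup E₁] [NormedSpace ℝ E₁] [NormedAddCommGroup E₁'] [NormedSpace ℝ E₁']
  [NormedAddCommGroup F] [NormedSpace ℝ F] [NormedAddCommGroup F'] [NormedSpace ℝ F']
  [NormedAddCommGroup F₁] [NormedSpace ℝ F₁] {S : ℝ}

theorem exists_isometry_comp_convolution_eq (L : E₁ →L[ℝ] F₁ →L[ℝ] F) (a : E₁ ≃ₗᵢ[ℝ] E₁')
    (b : F ≃ₗᵢ[ℝ] F') (f : V → E₁) (g : V → F₁) : ∃ L' : E₁' →L[ℝ] F₁ →L[ℝ] F', ‖L'‖ ≤ ‖L‖ ∧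
      b ∘ (f ⋆[L, μ] g) = (a ∘ f) ⋆[L', μ] g := by
  refine ⟨.compL ℝ F₁ F F' (b : F →L[ℝ] F') ∘L L ∘L (a.symm : E₁' →L[ℝ] E₁),
    ContinuousLinearMap.opNorm_le_bound₂ _ (norm_nonneg L) fun x y ↦ ?_, ?_⟩
  · simpa using L.le_opNorm₂ (a.symm x) y
  · funext x
    simpa [convolution] using (b.toContinuousLinearEquiv.integral_comp_comm (𝕜 := ℝ)
      fun t ↦ L (f t) (g (x - t))).symm

theorem norm_convolution_le (L : E₁ →L[ℝ] F₁ →L[ℝ] F) {f : V → E₁} {g : V → F₁}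
    (hf : Integrable f μ) (hS : ∀ x, ‖g x‖ ≤ S) (x : V) :
    ‖(f ⋆[L, μ] g) x‖ ≤ ‖L‖ * (∫ y, ‖f y‖ ∂μ) * S := by
  calc ‖(f ⋆[L, μ] g) x‖ ≤ ∫ y, ‖L‖ * S * ‖f y‖ ∂μ := by
        refine norm_integral_le_of_norm_le (hf.norm.const_mul _) (.of_forall fun y ↦ ?_)
        calc ‖L (f y) (g (x - y))‖ ≤ ‖L‖ * ‖f y‖ * ‖g (x - y)‖ := L.le_opNorm₂ _ _
          _ ≤ ‖L‖ * ‖f y‖ * S := by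
            gcongr
            exact hS _
          _ = ‖L‖ * S * ‖f y‖ := by ring
    _ = ‖L‖ * (∫ y, ‖f y‖ ∂μ) * S := by rw [integral_const_mul, mul_right_comm]

variable [NormedSpace ℝ V] [FiniteDimensional ℝ V] [BorelSpace V] [μ.IsAddHaarMeasure]

set_option maxSynthPendingDepth 4 in
theorem exists_iteratedFDeriv_convolution_eq (L : E₁ →L[ℝ] F₁ →L[ℝ] F) {f : V → E₁} {g : V → F₁}
    (hf : ContDiff ℝ ∞ f) (hfc : HasCompactSupport f) (hg : LocallyIntegrable g μ) (i : ℕ) :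
    ∃ L' : (V [×i]→L[ℝ] E₁) →L[ℝ] F₁ →L[ℝ] V [×i]→L[ℝ] F, ‖L'‖ ≤ ‖L‖ ∧
      iteratedFDeriv ℝ i (f ⋆[L, μ] g) = iteratedFDeriv ℝ i f ⋆[L', μ] g := by
  induction i with
  | zero =>
    exact exists_isometry_comp_convolution_eq L (continuousMultilinearCurryFin0 ℝ V E₁).symm
      (continuousMultilinearCurryFin0 ℝ V F).symm f g
  | succ i ih =>
    obtain ⟨L', hL', h⟩ := ih
    have hfi : ContDiff ℝ 1 (iteratedFDeriv ℝ i f) :=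
      hf.iteratedFDeriv_right (by exact_mod_cast le_top)
    have hfderiv : fderiv ℝ (iteratedFDeriv ℝ i f ⋆[L', μ] g) =
        fderiv ℝ (iteratedFDeriv ℝ i f) ⋆[L'.precompL V, μ] g := by
      funext y
      exact ((hfc.iteratedFDeriv i).hasFDerivAt_convolution_left L' hfi hg y).fderiv
    obtain ⟨L'', hL'', h'⟩ := exists_isometry_comp_convolution_eq (μ := μ) (L'.precompL V)
      (continuousMultilinearCurryLeftEquiv ℝ (fun _ : Fin (i + 1) ↦ V) E₁).symm
      (continuousMultilinearCurryLeftEquiv ℝ (fun _ : Fin (i + 1) ↦ V) F).symm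
      (fderiv ℝ (iteratedFDeriv ℝ i f)) g
    refine ⟨L'', hL''.trans ((L'.norm_precompL_le V).trans hL'), ?_⟩
    rw [iteratedFDeriv_succ_eq_comp_left, h, hfderiv, h', iteratedFDeriv_succ_eq_comp_left]

set_option maxSynthPendingDepth 4 in
theorem norm_iteratedFDeriv_convolution_le (L : E₁ →L[ℝ] F₁ →L[ℝ] F) {f : V → E₁} {g : V → F₁}
    (hf : ContDiff ℝ ∞ f) (hfc : HasCompactSupport f) (hg : LocallyIntegrable g μ)
    (hS : ∀ x, ‖g x‖ ≤ S) (i : ℕ) (x : V) :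
    ‖iteratedFDeriv ℝ i (f ⋆[L, μ] g) x‖ ≤ ‖L‖ * (∫ y, ‖iteratedFDeriv ℝ i f y‖ ∂μ) * S := by
  have hS0 : 0 ≤ S := (norm_nonneg _).trans (hS 0)
  obtain ⟨L', hL', h⟩ := exists_iteratedFDeriv_convolution_eq L hf hfc hg i
  have hfi : Continuous (iteratedFDeriv ℝ i f) :=
    hf.continuous_iteratedFDeriv (by exact_mod_cast le_top)
  rw [h]
  refine (norm_convolution_le L'
    (hfi.integrable_of_hasCompactSupport (hfc.iteratedFDeriv i)) hS x).trans ?_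
  gcongr

end Convolution

section Mollify

variable {V F : Type*} [NormedAddCommGroup V] [NormedSpace ℝ V] [MeasurableSpace V]
  [NormedAddCommGroup F] [NormedSpace ℝ F]

/-- `R` is a standard mollifier with respect to `μ`: smooth, nonnegative, even, supported in the
closed unit ball and of integral one. -/
structure IsMollifier (μ : Measure V) (R : V → ℝ) : Prop where
  contDiff : ContDiff ℝ ∞ R
  nonneg : ∀ z, 0 ≤ R z
  even : ∀ z, R (-z) = R z
  eq_zero : ∀ z, 1 < ‖z‖ → R z = 0
  integral_eq_one : ∫ z, R z ∂μ = 1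

/-- The mollification of `g` by the kernel `R` in the linear coordinates `P`: the average of the
values `g (p - P z)` with weight `R z`. The size of `P` is the scale of the mollification. -/
noncomputable def mollify (μ : Measure V) (R : V → ℝ) (P : V ≃L[ℝ] V) (g : V → F) (p : V) : F :=
  ∫ z, R z • g (p - P z) ∂μ

theorem mollify_eq_convolution {μ : Measure V} {R : V → ℝ} {P : V ≃L[ℝ] V} (g : V → F) :
    mollify μ R P g = (R ⋆[ContinuousLinearMap.lsmul ℝ ℝ, μ] (g ∘ P)) ∘ P.symm := by
  funext p
  simp [mollify, convolution]

theorem locallyIntegrable_comp {X F : Type*} [TopologicalSpace X] [MeasurableSpace X]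
    [OpensMeasurableSpace X] [NormedAddCommGroup F] {μ : Measure X} [IsLocallyFiniteMeasure μ]
    {e : X → X} {g : X → F} {S : ℝ} (he : Measurable e) (hg : StronglyMeasurable g)
    (hS : ∀ x, ‖g x‖ ≤ S) : LocallyIntegrable (g ∘ e) μ :=
  (locallyIntegrable_const (μ := μ) S).mono (hg.comp_measurable he).aestronglyMeasurable
    (.of_forall fun _ ↦ (hS _).trans (le_abs_self S))

variable [FiniteDimensional ℝ V] {μ : Measure V} {R : V → ℝ} {P : V ≃L[ℝ] V} {g : V → F}
  {A K S c r s : ℝ} {i j k l m : ℕ}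

theorem IsMollifier.hasCompactSupport (hR : IsMollifier μ R) : HasCompactSupport R := by
  refine .intro (isCompact_closedBall (0 : V) 1) fun z hz ↦ hR.eq_zero z ?_
  simpa using hz

variable [BorelSpace V] [μ.IsAddHaarMeasure]

namespace IsMollifier

theorem integrable (hR : IsMollifier μ R) : Integrable R μ :=
  hR.contDiff.continuous.integrable_of_hasCompactSupport hR.hasCompactSupport

theorem norm_integral_smul_le (hR : IsMollifier μ R) {f : V → F}
    (h : ∀ z, ‖z‖ ≤ 1 → ‖f z‖ ≤ c) : ‖∫ z, R z • f z ∂μ‖ ≤ c := by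
  calc ‖∫ z, R z • f z ∂μ‖ ≤ ∫ z, R z * c ∂μ := by
        refine norm_integral_le_of_norm_le (hR.integrable.mul_const c) (.of_forall fun z ↦ ?_)
        rw [norm_smul, Real.norm_of_nonneg (hR.nonneg z)]
        rcases le_or_gt ‖z‖ 1 with hz | hz
        · exact mul_le_mul_of_nonneg_left (h z hz) (hR.nonneg z)
        · simp [hR.eq_zero z hz]
    _ = c := by rw [integral_mul_const, hR.integral_eq_one, one_mul]

theorem integrable_smul (hR : IsMollifier μ R) (hg : StronglyMeasurable g)
    (hS : ∀ x, ‖g x‖ ≤ S) : Integrable (fun z ↦ R z • g z) μ :=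
  hR.integrable.smul_bdd S hg.aestronglyMeasurable (.of_forall hS)

theorem integrable_smul_comp (hR : IsMollifier μ R) (hg : StronglyMeasurable g)
    (hS : ∀ x, ‖g x‖ ≤ S) (p : V) : Integrable (fun z ↦ R z • g (p - P z)) μ :=
  hR.integrable_smul (g := fun z ↦ g (p - P z))
    (hg.comp_measurable (by fun_prop : Continuous fun z ↦ p - P z).measurable) fun _ ↦ hS _

theorem fwdDiff_mollify (hR : IsMollifier μ R) (hg : StronglyMeasurable g)
    (hS : ∀ x, ‖g x‖ ≤ S) (v : V) :
    Δ_[v] (mollify μ R P g) = mollify μ R P (Δ_[v] g) := by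
  funext p
  simp only [fwdDiff, mollify, smul_sub]
  rw [← integral_sub (hR.integrable_smul_comp hg hS _) (hR.integrable_smul_comp hg hS p)]
  simp only [sub_add_eq_add_sub]

theorem contDiff_convolution (hR : IsMollifier μ R) (hg : StronglyMeasurable g)
    (hS : ∀ x, ‖g x‖ ≤ S) :
    ContDiff ℝ ∞ (R ⋆[ContinuousLinearMap.lsmul ℝ ℝ, μ] (g ∘ P)) :=
  hR.hasCompactSupport.contDiff_convolution_left (n := ⊤) _ hR.contDiff
    (locallyIntegrable_comp P.continuous.measurable hg hS)

theorem contDiff_mollify (hR : IsMollifier μ R) (hg : StronglyMeasurable g)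
    (hS : ∀ x, ‖g x‖ ≤ S) : ContDiff ℝ ∞ (mollify μ R P g) := by
  rw [mollify_eq_convolution]
  exact (hR.contDiff_convolution hg hS).comp P.symm.contDiff

theorem norm_iteratedFDeriv_mollify_le (hR : IsMollifier μ R) (hg : StronglyMeasurable g)
    (hS : ∀ x, ‖g x‖ ≤ S) (i : ℕ) (p : V) :
    ‖iteratedFDeriv ℝ i (mollify μ R P g) p‖ ≤
      (∫ z, ‖iteratedFDeriv ℝ i R z‖ ∂μ) * ‖(P.symm : V →L[ℝ] V)‖ ^ i * S := by
  have hS0 : 0 ≤ S := (norm_nonneg _).trans (hS 0)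
  rw [mollify_eq_convolution]
  calc _ ≤ ‖iteratedFDeriv ℝ i (R ⋆[ContinuousLinearMap.lsmul ℝ ℝ, μ] (g ∘ P)) (P.symm p)‖ *
        ‖(P.symm : V →L[ℝ] V)‖ ^ i := by
        have := (P.symm : V →L[ℝ] V).iteratedFDeriv_comp_right
          (hR.contDiff_convolution (P := P) hg hS) p (i := i) (by exact_mod_cast le_top)
        simp only [ContinuousLinearEquiv.coe_coe] at this
        rw [this]
        simpa using ContinuousMultilinearMap.norm_compContinuousLinearMap_le
          (iteratedFDeriv ℝ i (R ⋆[ContinuousLinearMap.lsmul ℝ ℝ, μ] (g ∘ P)) (P.symm p))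
          fun _ ↦ (P.symm : V →L[ℝ] V)
    _ ≤ 1 * (∫ z, ‖iteratedFDeriv ℝ i R z‖ ∂μ) * S * ‖(P.symm : V →L[ℝ] V)‖ ^ i := by
        gcongr
        refine (norm_iteratedFDeriv_convolution_le _ hR.contDiff hR.hasCompactSupport
          (locallyIntegrable_comp P.continuous.measurable hg hS) (fun _ ↦ hS _) i _).trans ?_
        gcongr
        exact ContinuousLinearMap.opNorm_lsmul_le
    _ = _ := by ring

theorem hasFDerivAt_mollify (hR : IsMollifier μ R) (hg : CBound 1 S g) (p : V) :
    HasFDerivAt (mollify μ R P g) (mollify μ R P (fderiv ℝ g) p) p := by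
  have hg' : ∀ x, ‖fderiv ℝ g x‖ ≤ S := fun x ↦ by
    simpa [← norm_iteratedFDeriv_fderiv] using hg.norm_le 1 le_rfl x
  have hgm := hg.contDiff.continuous.stronglyMeasurable
  have hgm' := (hg.contDiff.continuous_fderiv (by simp)).stronglyMeasurable
  refine hasFDerivAt_integral_of_dominated_of_fderiv_le (𝕜 := ℝ) (bound := fun z ↦ R z * S)
    (F' := fun p z ↦ R z • fderiv ℝ g (p - P z)) (s := Set.univ) Filter.univ_mem
    (.of_forall fun x ↦ (hR.integrable_smul_comp hgm hg.norm_apply_le x).aestronglyMeasurable)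
    (hR.integrable_smul_comp hgm hg.norm_apply_le p)
    (hR.integrable_smul_comp hgm' hg' p).aestronglyMeasurable
    (.of_forall fun z x _ ↦ ?_) (hR.integrable.mul_const S) (.of_forall fun z x _ ↦ ?_)
  · rw [norm_smul, Real.norm_of_nonneg (hR.nonneg z)]
    exact mul_le_mul_of_nonneg_left (hg' _) (hR.nonneg z)
  · have hgx := (hg.contDiff.differentiable (by simp) (x - P z)).hasFDerivAt
    exact (hgx.comp x ((hasFDerivAt_id x).sub_const (P z))).const_smul (R z)

theorem iteratedFDeriv_mollify (hR : IsMollifier μ R) (hg : CBound m S g) (hj : j ≤ m) :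
    iteratedFDeriv ℝ j (mollify μ R P g) = mollify μ R P (iteratedFDeriv ℝ j g) := by
  induction j with
  | zero =>
    funext p
    exact ((continuousMultilinearCurryFin0 ℝ V F).symm.toContinuousLinearEquiv.integral_comp_comm
      (μ := μ) fun z ↦ R z • g (p - P z)).symm
  | succ j ih =>
    have hg' : CBound 1 S (iteratedFDeriv ℝ j g) :=
      (hg.of_le ((add_comm 1 j).trans_le hj)).comp_iteratedFDeriv
    funext p
    rw [iteratedFDeriv_succ_eq_comp_left, ih (j.le_succ.trans hj), Function.comp_apply,
      (hR.hasFDerivAt_mollify hg' p).fderiv]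
    let e : (V →L[ℝ] V [×j]→L[ℝ] F) ≃L[ℝ] V [×(j + 1)]→L[ℝ] F :=
      (continuousMultilinearCurryLeftEquiv ℝ (fun _ : Fin (j + 1) ↦ V) F).symm
    exact (e.integral_comp_comm (𝕜 := ℝ)
      fun z ↦ R z • fderiv ℝ (iteratedFDeriv ℝ j g) (p - P z)).symm

theorem integral_smul_neg (hR : IsMollifier μ R) (f : V → F) :
    ∫ z, R z • f (-z) ∂μ = ∫ z, R z • f z ∂μ := by
  simpa [hR.even] using integral_neg_eq_self (fun z ↦ R z • f z) μ

theorem two_smul_sub_mollify [CompleteSpace F] (hR : IsMollifier μ R) (hg : StronglyMeasurable g)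
    (hS : ∀ x, ‖g x‖ ≤ S) (p : V) :
    (2 : ℝ) • (g p - mollify μ R P g p) = -∫ z, R z • (Δ_[P z])^[2] g (p - P z) ∂μ := by
  have hsymm : ∫ z, R z • g (p + P z) ∂μ = mollify μ R P g p := by
    simpa [mollify] using hR.integral_smul_neg fun z ↦ g (p - P z)
  have hplus : Integrable (fun z ↦ R z • g (p + P z)) μ :=
    hR.integrable_smul (g := fun z ↦ g (p + P z))
      (hg.comp_measurable (by fun_prop : Continuous fun z ↦ p + P z).measurable) fun _ ↦ hS _
  have hconst : Integrable (fun z ↦ R z • (2 : ℝ) • g p) μ := hR.integrable.smul_const _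
  have hΔ (z : V) : R z • (Δ_[P z])^[2] g (p - P z) =
      R z • g (p + P z) - R z • (2 : ℝ) • g p + R z • g (p - P z) := by
    simp only [Function.iterate_succ, Function.iterate_zero, Function.comp_apply, id, fwdDiff,
      sub_add_cancel]
    module
  simp_rw [hΔ]
  rw [integral_add (by exact hplus.sub hconst) (hR.integrable_smul_comp hg hS p),
    integral_sub hplus hconst, hsymm, integral_smul_const, hR.integral_eq_one, ← mollify]
  module

theorem norm_sub_mollify_le [CompleteSpace F] (hR : IsMollifier μ R)
    (hP : ‖(P : V →L[ℝ] V)‖ ≤ r) (hi : i ≤ 2) (hg : StronglyMeasurable g) (hS : ∀ x, ‖g x‖ ≤ S)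
    (h : ∀ v, ‖v‖ ≤ r → ∀ x, ‖(Δ_[v])^[i] g x‖ ≤ c) (p : V) :
    ‖g p - mollify μ R P g p‖ ≤ 2 * c := by
  have hr : 0 ≤ r := (norm_nonneg _).trans hP
  have hc : 0 ≤ c := (norm_nonneg _).trans (h 0 (by simpa using hr) 0)
  have hΔ (z : V) (hz : ‖z‖ ≤ 1) : ‖(Δ_[P z])^[2] g (p - P z)‖ ≤ 4 * c := by
    have hPz : ‖P z‖ ≤ r := ((P : V →L[ℝ] V).unit_le_opNorm z hz).trans hP
    calc ‖(Δ_[P z])^[2] g (p - P z)‖ ≤ 2 ^ (2 - i) * c := by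
          simpa [Nat.sub_add_cancel hi] using
            norm_fwdDiff_iterate_add_le (h _ hPz) (2 - i) (p - P z)
      _ ≤ 2 ^ 2 * c := by
          gcongr
          · norm_num
          · exact Nat.sub_le 2 i
      _ = 4 * c := by norm_num
  have h2 := (congrArg norm (hR.two_smul_sub_mollify (P := P) hg hS p)).trans_le
    ((norm_neg _).trans_le (hR.norm_integral_smul_le hΔ))
  rw [norm_smul, Real.norm_ofNat] at h2
  linarith

theorem norm_iteratedFDeriv_mollify_le_mul_pow (hR : IsMollifier μ R)
    (hK : ∀ j ≤ i, ∫ z, ‖iteratedFDeriv ℝ j R z‖ ∂μ ≤ K)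
    (hP : ‖(P.symm : V →L[ℝ] V)‖ ≤ s) (hs : 1 ≤ s) (hg : StronglyMeasurable g)
    (hS : ∀ x, ‖g x‖ ≤ S) (hj : j ≤ i) (p : V) :
    ‖iteratedFDeriv ℝ j (mollify μ R P g) p‖ ≤ K * s ^ i * S := by
  have hS0 : 0 ≤ S := (norm_nonneg _).trans (hS 0)
  have hKj := hK j hj
  have hK0 : 0 ≤ K := (integral_nonneg fun _ ↦ norm_nonneg _).trans hKj
  calc _ ≤ (∫ z, ‖iteratedFDeriv ℝ j R z‖ ∂μ) * ‖(P.symm : V →L[ℝ] V)‖ ^ j * S :=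
        hR.norm_iteratedFDeriv_mollify_le hg hS j p
    _ ≤ K * s ^ j * S := by gcongr
    _ ≤ K * s ^ i * S := by gcongr

theorem cBound_mollify (hR : IsMollifier μ R)
    (hK : ∀ j ≤ i, ∫ z, ‖iteratedFDeriv ℝ j R z‖ ∂μ ≤ K)
    (hP : ‖(P.symm : V →L[ℝ] V)‖ ≤ s) (hs : 1 ≤ s) (hg : CBound m A g) :
    CBound (m + i) (K * s ^ i * A) (mollify μ R P g) where
  contDiff := (hR.contDiff_mollify hg.contDiff.continuous.stronglyMeasurable
    hg.norm_apply_le).of_le (by exact_mod_cast le_top)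
  norm_le j hj p := by
    obtain ⟨a, b, rfl, ha, hb⟩ : ∃ a b, a + b = j ∧ a ≤ i ∧ b ≤ m :=
      ⟨j - min j m, min j m, by lia, by lia, by lia⟩
    rw [← norm_iteratedFDeriv_iteratedFDeriv, hR.iteratedFDeriv_mollify hg hb]
    exact hR.norm_iteratedFDeriv_mollify_le_mul_pow hK hP hs (hg.contDiff.continuous_iteratedFDeriv
      (by exact_mod_cast hb)).stronglyMeasurable (hg.norm_le b hb) ha p

theorem cBound_sub_mollify [CompleteSpace F] (hR : IsMollifier μ R)
    (hP : ‖(P : V →L[ℝ] V)‖ ≤ r) (hi : i ≤ 2) (hg : CBound m A g)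
    (hΔ : ∀ v, ‖v‖ ≤ r → CBound m c ((Δ_[v])^[i] g)) :
    CBound m (2 * c) (g - mollify μ R P g) := by
  have hT : ContDiff ℝ m (mollify μ R P g) :=
    (hR.contDiff_mollify hg.contDiff.continuous.stronglyMeasurable hg.norm_apply_le).of_le
      (by exact_mod_cast le_top)
  refine ⟨hg.contDiff.sub hT, fun j hj p ↦ ?_⟩
  have hjm : (j : ℕ∞ω) ≤ m := by exact_mod_cast hj
  rw [iteratedFDeriv_sub (hg.contDiff.of_le hjm) (hT.of_le hjm), Pi.sub_apply,
    hR.iteratedFDeriv_mollify hg hj]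
  refine hR.norm_sub_mollify_le hP hi
    (hg.contDiff.continuous_iteratedFDeriv hjm).stronglyMeasurable (hg.norm_le j hj)
    (fun v hv x ↦ ?_) p
  rw [← iteratedFDeriv_fwdDiff_iterate (hg.contDiff.of_le hjm)]
  exact (hΔ v hv).norm_le j hj x

variable {ψ : V → ℝ}

theorem wBound_mollify (hR : IsMollifier μ R)
    (hK : ∀ j ≤ i, ∫ z, ‖iteratedFDeriv ℝ j R z‖ ∂μ ≤ K)
    (hP : ‖(P.symm : V →L[ℝ] V)‖ ≤ s) (hs : 1 ≤ s) (hψ : WBound k A ψ) :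
    WBound (k + i) (K * s ^ i * A) (mollify μ R P ψ) := by
  have hψm := hψ.measurable.stronglyMeasurable
  cases k with
  | zero =>
    refine CBound.wBound ⟨(hR.contDiff_mollify hψm hψ.2).of_le (by exact_mod_cast le_top),
      fun j hj ↦ hR.norm_iteratedFDeriv_mollify_le_mul_pow hK hP hs hψm hψ.2 ?_⟩
    exact hj.trans_eq (zero_add i)
  | succ m =>
    obtain ⟨hC, hΔ⟩ := wBound_succ_iff.1 hψ
    rw [Nat.add_right_comm, wBound_succ_iff]
    refine ⟨hR.cBound_mollify hK hP hs hC, fun v ↦ ?_⟩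
    rw [hR.fwdDiff_mollify hψm hψ.abs_le, mul_assoc (_ * _)]
    exact hR.cBound_mollify hK hP hs (hΔ v)

theorem wBound_sub_mollify (hR : IsMollifier μ R) (hP : ‖(P : V →L[ℝ] V)‖ ≤ r) (hi : i ≤ 2)
    (hψ : WBound (l + i) A ψ) : WBound l (2 * (A * r ^ i)) (ψ - mollify μ R P ψ) := by
  have hA := hψ.nonneg
  have hψm := hψ.measurable.stronglyMeasurable
  have hψA := hψ.abs_le
  have hΔ (v : V) (hv : ‖v‖ ≤ r) : WBound l (A * r ^ i) ((Δ_[v])^[i] ψ) :=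
    (hψ.fwdDiff_iterate v).mono (by gcongr)
  cases l with
  | zero =>
    exact ⟨hψ.measurable.sub (hR.contDiff_mollify hψm hψA).continuous.measurable,
      hR.norm_sub_mollify_le hP hi hψm hψA fun v hv ↦ (hΔ v hv).2⟩
  | succ m =>
    rw [Nat.add_right_comm, wBound_succ_iff] at hψ
    obtain ⟨hC, hCΔ⟩ := hψ
    have hCm := hC.of_le (Nat.le_add_right m i)
    refine wBound_succ_iff.2 ⟨hR.cBound_sub_mollify hP hi hCm fun v hv ↦
      (wBound_succ_iff.1 (hΔ v hv)).1, fun w ↦ ?_⟩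
    rw [fwdDiff_sub, hR.fwdDiff_mollify hψm hψA, mul_assoc 2]
    refine hR.cBound_sub_mollify hP hi ((hCΔ w).of_le (Nat.le_add_right m i)) fun v hv ↦ ?_
    rw [(fwdDiff_commute v w).iterate_left i ψ]
    exact (wBound_succ_iff.1 (hΔ v hv)).2 w

end IsMollifier

end Mollify

section Product

theorem IsMollifier.prod {V W : Type*} [NormedAddCommGroup V] [NormedSpace ℝ V]
    [MeasurableSpace V] [NormedAddCommGroup W] [NormedSpace ℝ W] [MeasurableSpace W]
    {μ : Measure V} {ν : Measure W} [SFinite μ] [SFinite ν] {ρ : V → ℝ} {σ : W → ℝ}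
    (hρ : IsMollifier μ ρ) (hσ : IsMollifier ν σ) :
    IsMollifier (μ.prod ν) fun z ↦ ρ z.1 * σ z.2 where
  contDiff := (hρ.contDiff.comp contDiff_fst).mul (hσ.contDiff.comp contDiff_snd)
  nonneg z := mul_nonneg (hρ.nonneg _) (hσ.nonneg _)
  even z := by simp [hρ.even, hσ.even]
  eq_zero z hz := by
    rcases lt_max_iff.1 hz with hz | hz <;> simp [hρ.eq_zero, hσ.eq_zero, hz]
  integral_eq_one := by
    rw [integral_prod_mul ρ σ, hρ.integral_eq_one, hσ.integral_eq_one, one_mul]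

end Product

section Strip

variable {E : Type*} [NormedAddCommGroup E] [NormedSpace ℝ E] {η : ℝ}

/-- The coordinate `x₋ = (x - y) / 2` on pairs `(x, y)`, in which the strip is `‖x₋‖ ≤ 1`. -/
noncomputable def halfDiff (E : Type*) [NormedAddCommGroup E] [NormedSpace ℝ E] :
    E × E →L[ℝ] E :=
  (2 : ℝ)⁻¹ • (ContinuousLinearMap.fst ℝ E E - ContinuousLinearMap.snd ℝ E E)

/-- The change from the coordinates `(x₊, x₋)` at scale `η` to `(x, y) = η • (x₊ + x₋, x₊ - x₋)`. -/
noncomputable def stripChange (E : Type*) [NormedAddCommGroup E] [NormedSpace ℝ E] {η : ℝ}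
    (hη : η ≠ 0) : (E × E) ≃L[ℝ] (E × E) :=
  .equivOfInverse
    (η • ((ContinuousLinearMap.fst ℝ E E + ContinuousLinearMap.snd ℝ E E).prod
      (ContinuousLinearMap.fst ℝ E E - ContinuousLinearMap.snd ℝ E E)))
    (η⁻¹ • (((2 : ℝ)⁻¹ • (ContinuousLinearMap.fst ℝ E E + ContinuousLinearMap.snd ℝ E E)).prod
      (halfDiff E)))
    (fun z ↦ by
      ext <;> simp only [halfDiff, smul_apply, ContinuousLinearMap.prod_apply, add_apply, sub_apply,
        ContinuousLinearMap.coe_fst', ContinuousLinearMap.coe_snd', Prod.smul_mk] <;>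
        match_scalars <;> field)
    (fun p ↦ by
      ext <;> simp only [halfDiff, smul_apply, ContinuousLinearMap.prod_apply, add_apply, sub_apply,
        ContinuousLinearMap.coe_fst', ContinuousLinearMap.coe_snd', Prod.smul_mk] <;>
        match_scalars <;> field)

theorem halfDiff_apply (p : E × E) : halfDiff E p = (2 : ℝ)⁻¹ • (p.1 - p.2) := by
  simp [halfDiff]

theorem stripChange_apply (hη : η ≠ 0) (z : E × E) :
    stripChange E hη z = (η • (z.1 + z.2), η • (z.1 - z.2)) := by
  simp [stripChange]

theorem stripChange_symm_apply (hη : η ≠ 0) (p : E × E) :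
    (stripChange E hη).symm p = (η⁻¹ • (2 : ℝ)⁻¹ • (p.1 + p.2), η⁻¹ • halfDiff E p) := by
  simp [stripChange]

theorem halfDiff_add_sub (u w : E) : halfDiff E (u + w, u - w) = w := by
  rw [halfDiff_apply]
  module

theorem halfDiff_stripChange (hη : η ≠ 0) (z : E × E) :
    halfDiff E (stripChange E hη z) = η • z.2 := by
  rw [stripChange_apply, smul_add, smul_sub, halfDiff_add_sub]

theorem one_lt_norm_halfDiff_iff {p : E × E} : 1 < ‖halfDiff E p‖ ↔ ¬‖p.1 - p.2‖ ≤ 2 := by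
  rw [halfDiff_apply, norm_smul, not_le, norm_inv, Real.norm_two, ← div_eq_inv_mul,
    one_lt_div two_pos]

theorem norm_halfDiff_apply_le (p : E × E) : ‖halfDiff E p‖ ≤ ‖p‖ := by
  rw [halfDiff_apply, norm_smul, norm_inv, Real.norm_two]
  linarith [norm_sub_le p.1 p.2, norm_fst_le p, norm_snd_le p]

theorem norm_halfDiff_le_one : ‖halfDiff E‖ ≤ 1 :=
  ContinuousLinearMap.opNorm_le_bound _ zero_le_one fun p ↦ by
    simpa using norm_halfDiff_apply_le p

theorem norm_stripChange_le (hη : 0 < η) :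
    ‖(stripChange E hη.ne' : E × E →L[ℝ] E × E)‖ ≤ 2 * η := by
  refine ContinuousLinearMap.opNorm_le_bound _ (by positivity) fun z ↦ ?_
  rw [ContinuousLinearEquiv.coe_coe, stripChange_apply, Prod.norm_def, mul_comm 2, mul_assoc]
  simp only [norm_smul, Real.norm_of_nonneg hη.le]
  refine max_le ?_ ?_ <;> gcongr <;>
    linarith [norm_add_le z.1 z.2, norm_sub_le z.1 z.2, norm_fst_le z, norm_snd_le z]

theorem norm_stripChange_symm_le (hη : 0 < η) :
    ‖((stripChange E hη.ne').symm : E × E →L[ℝ] E × E)‖ ≤ η⁻¹ := by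
  refine ContinuousLinearMap.opNorm_le_bound _ (by positivity) fun p ↦ ?_
  rw [ContinuousLinearEquiv.coe_coe, stripChange_symm_apply, Prod.norm_def]
  simp only [norm_smul, norm_inv, Real.norm_two, Real.norm_of_nonneg hη.le]
  refine max_le ?_ ?_ <;> gcongr
  · linarith [norm_add_le p.1 p.2, norm_fst_le p, norm_snd_le p]
  · exact norm_halfDiff_apply_le p

theorem exists_norm_halfDiff_eq_add [Nontrivial E] (p : E × E) {t : ℝ} (ht : 0 ≤ t) :
    ∃ q, dist p q = t ∧ ‖halfDiff E q‖ = ‖halfDiff E p‖ + t := by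
  obtain ⟨e, he, hpe⟩ : ∃ e : E, ‖e‖ = 1 ∧ halfDiff E p = ‖halfDiff E p‖ • e := by
    rcases eq_or_ne (halfDiff E p) 0 with h | h
    · obtain ⟨e, he⟩ := exists_norm_eq E zero_le_one
      exact ⟨e, he, by simp [h]⟩
    · exact ⟨‖halfDiff E p‖⁻¹ • halfDiff E p, norm_smul_inv_norm h,
        (smul_inv_smul₀ (norm_ne_zero_iff.2 h) _).symm⟩
  refine ⟨p + t • (e, -e), ?_, ?_⟩
  · simp [dist_eq_norm, norm_smul, Prod.norm_def, he, abs_of_nonneg ht]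
  · have hq : halfDiff E (p + t • (e, -e)) = (‖halfDiff E p‖ + t) • e := by
      rw [map_add, add_smul, ← hpe, map_smul, halfDiff_apply (e, -e)]
      module
    rw [hq, norm_smul, he, mul_one, Real.norm_of_nonneg (by positivity)]

/-- `Φ` vanishes outside the strip `Ω = {(x, y) : ‖x - y‖ ≤ 2}`. -/
def VanishesOffStrip (Φ : E × E → ℝ) : Prop :=
  ∀ p : E × E, ¬‖p.1 - p.2‖ ≤ 2 → Φ p = 0

theorem VanishesOffStrip.notMem_tsupport {Φ : E × E → ℝ} (hΦ : VanishesOffStrip Φ) {q : E × E}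
    (hq : 1 < ‖halfDiff E q‖) : q ∉ tsupport Φ := by
  have hclosed : IsClosed {p | ‖halfDiff E p‖ ≤ 1} :=
    isClosed_le (halfDiff E).continuous.norm continuous_const
  refine fun h ↦ hq.not_ge (closure_minimal (fun p hp ↦ ?_) hclosed h)
  exact not_lt.1 fun h1 ↦ hp (hΦ p (one_lt_norm_halfDiff_iff.1 h1))

/-- The cut-off `θ_η` of the smoothing family, with derivatives up to order `N` under control. -/
structure IsStripCutoff (N : ℕ) (C₀ η : ℝ) (θ : ℝ → ℝ) : Prop where
  contDiff : ContDiff ℝ ∞ θ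
  abs_le_one : ∀ s, |θ s| ≤ 1
  eq_zero : ∀ s, 1 - 2 * η ≤ |s| → θ s = 0
  eq_one : ∀ s, |s| ≤ 1 - 3 * η → θ s = 1
  abs_iteratedDeriv_le : ∀ j, 1 ≤ j → j ≤ N → ∀ s, |iteratedDeriv j θ s| ≤ C₀ * (η ^ j)⁻¹

/-- The function `(x, y) ↦ Θ_η(x₋)`, where `Θ_η = θ(‖·‖²)`. -/
noncomputable def stripCutoff (θ : ℝ → ℝ) (p : E × E) : ℝ :=
  θ (‖halfDiff E p‖ ^ 2)

variable {N : ℕ} {C₀ : ℝ} {θ : ℝ → ℝ}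

namespace IsStripCutoff

theorem tsupport_one_sub_stripCutoff_subset (hθ : IsStripCutoff N C₀ η θ) :
    tsupport (1 - stripCutoff θ : E × E → ℝ) ⊆ {p | 1 - 3 * η ≤ ‖halfDiff E p‖ ^ 2} := by
  refine closure_minimal (fun p hp ↦ ?_)
    (isClosed_le continuous_const ((halfDiff E).continuous.norm.pow 2))
  by_contra h
  rw [Set.mem_ofPred_eq, not_le] at h
  exact hp (by simp [stripCutoff, hθ.eq_one (‖halfDiff E p‖ ^ 2) (by simpa using h.le)])

theorem tsupport_one_sub_stripCutoff_subset_thickening [Nontrivial E]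
    (hθ : IsStripCutoff N C₀ η θ) (hη : 0 < η) {Φ : E × E → ℝ} (hΦ : VanishesOffStrip Φ) :
    tsupport (1 - stripCutoff θ) ⊆ Metric.thickening (10 * η / 2) (tsupport Φ)ᶜ := by
  intro p hp
  have hp' := hθ.tsupport_one_sub_stripCutoff_subset hp
  rw [Set.mem_ofPred_eq] at hp'
  obtain ⟨q, hpq, hq⟩ := exists_norm_halfDiff_eq_add p (t := 4 * η) (by positivity)
  refine Metric.mem_thickening_iff.2 ⟨q, hΦ.notMem_tsupport ?_, by linarith⟩
  rw [hq]
  nlinarith [norm_nonneg (halfDiff E p)]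

theorem scaleBound (hθ : IsStripCutoff N C₀ η θ) (hη : 0 < η) : ScaleBound N (max 1 C₀) η θ where
  contDiff := hθ.contDiff.of_le (by exact_mod_cast le_top)
  norm_le j hj s := by
    rw [norm_iteratedFDeriv_eq_norm_iteratedDeriv, Real.norm_eq_abs]
    rcases j.eq_zero_or_pos with rfl | h
    · simpa using Or.inl (hθ.abs_le_one s)
    · exact (hθ.abs_iteratedDeriv_le j h hj s).trans (by gcongr; exact le_max_right 1 C₀)

end IsStripCutoff

end Strip

section ScaleBound

variable {V W : Type*} [NormedAddCommGroup V] [NormedSpace ℝ V] [NormedAddCommGroup W]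
  [NormedSpace ℝ W] {N : ℕ} {B η : ℝ}

theorem ScaleBound.comp_clm {χ : W → ℝ} (hχ : ScaleBound N B η χ) {L : V →L[ℝ] W}
    (hL : ‖L‖ ≤ 1) : ScaleBound N B η (χ ∘ L) where
  contDiff := hχ.contDiff.comp L.contDiff
  norm_le j hj x := by
    rw [L.iteratedFDeriv_comp_right hχ.contDiff x (by exact_mod_cast hj)]
    calc _ ≤ ‖iteratedFDeriv ℝ j χ (L x)‖ * ∏ _i : Fin j, ‖L‖ :=
          ContinuousMultilinearMap.norm_compContinuousLinearMap_le _ _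
      _ ≤ ‖iteratedFDeriv ℝ j χ (L x)‖ :=
          mul_le_of_le_one_right (norm_nonneg _) (by simpa using pow_le_one₀ (norm_nonneg L) hL)
      _ ≤ B * (η ^ j)⁻¹ := hχ.norm_le j hj _

theorem ScaleBound.one_sub {χ : V → ℝ} (hχ : ScaleBound N B η χ) (hη : 0 < η) :
    ScaleBound N (1 + B) η (1 - χ) where
  contDiff := contDiff_const.sub hχ.contDiff
  norm_le j hj x := by
    rcases j.eq_zero_or_pos with rfl | h
    · simpa using (abs_sub 1 (χ x)).trans (by simpa using hχ.abs_le x)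
    · rw [iteratedFDeriv_sub (f := 1) contDiff_const (hχ.of_le hj).contDiff, Pi.one_def,
        iteratedFDeriv_const_of_ne h.ne', zero_sub, Pi.neg_apply, norm_neg]
      refine (hχ.norm_le j hj x).trans ?_
      gcongr
      linarith

theorem exists_le_forall_le_bound (f : ℕ → ℝ) (c : ℝ) (N : ℕ) :
    ∃ D, c ≤ D ∧ ∀ i ≤ N, f i ≤ D := by
  obtain ⟨D, hD⟩ := (insert c ((Finset.Iic N).image f)).exists_le
  exact ⟨D, hD c (Finset.mem_insert_self _ _), fun i hi ↦ hD _ (Finset.mem_insert_of_mem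
    (Finset.mem_image_of_mem f (Finset.mem_Iic.2 hi)))⟩

theorem exists_scaleBound_comp_norm_sq (E : Type*) [NormedAddCommGroup E] [InnerProductSpace ℝ E]
    [FiniteDimensional ℝ E] (N : ℕ) : ∃ K : ℝ, 0 ≤ K ∧ ∀ {B η : ℝ} {θ : ℝ → ℝ}, 0 < η → η ≤ 1 →
      ScaleBound N B η θ → (∀ s, 1 ≤ s → θ s = 0) →
      ScaleBound N (K * B) η fun x : E ↦ θ (‖x‖ ^ 2) := by
  have hq : ContDiff ℝ ∞ fun x : E ↦ ‖x‖ ^ 2 := contDiff_norm_sq ℝ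
  have hbound (i : ℕ) : ∃ M : ℝ, ∀ x ∈ Metric.closedBall (0 : E) 1,
      ‖iteratedFDeriv ℝ i (fun x : E ↦ ‖x‖ ^ 2) x‖ ≤ M :=
    (isCompact_closedBall _ _).exists_bound_of_continuousOn
      (hq.continuous_iteratedFDeriv (by exact_mod_cast le_top)).continuousOn
  choose M hM using hbound
  obtain ⟨D, hD1, hD⟩ := exists_le_forall_le_bound M 1 N
  refine ⟨N.factorial * D ^ N, by positivity, fun {B η θ} hη hη1 hθ hθ0 ↦
    ⟨hθ.contDiff.comp (hq.of_le (by exact_mod_cast le_top)), fun j hj x ↦ ?_⟩⟩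
  have hB := hθ.nonneg
  by_cases hx : x ∈ Metric.closedBall (0 : E) 1
  · calc _ ≤ j.factorial * (B * (η ^ j)⁻¹) * D ^ j := by
          refine norm_iteratedFDeriv_comp_le (hθ.of_le hj).contDiff
            (hq.of_le (by exact_mod_cast le_top)) le_rfl x (fun i hi ↦ ?_) fun i hi1 hi ↦ ?_
          · refine (hθ.norm_le i (hi.trans hj) _).trans ?_
            have := pow_le_pow_of_le_one hη.le hη1 hi
            gcongr
          · exact (hM i x hx).trans ((hD i (hi.trans hj)).trans (le_self_pow₀ hD1 (by omega)))
      _ ≤ N.factorial * (B * (η ^ j)⁻¹) * D ^ N := by gcongr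
      _ = _ := by ring
  · have : x ∉ tsupport fun x : E ↦ θ (‖x‖ ^ 2) := by
      refine fun h ↦ hx ?_
      have hclosed : IsClosed {x : E | ‖x‖ ≤ 1} := isClosed_le continuous_norm continuous_const
      rw [mem_closedBall_zero_iff]
      refine closure_minimal (fun y hy ↦ ?_) hclosed h
      by_contra hy1
      rw [Set.mem_ofPred_eq, not_le] at hy1
      exact hy (hθ0 _ (one_le_pow₀ hy1.le))
    rw [iteratedFDeriv_eq_zero_of_notMem_tsupport this, norm_zero]
    positivity

end ScaleBound

section StripMollify

theorem exists_scaleBound_one_sub_stripCutoff (E : Type*) [NormedAddCommGroup E]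
    [InnerProductSpace ℝ E] [FiniteDimensional ℝ E] (N : ℕ) (C₀ : ℝ) :
    ∃ B : ℝ, 0 ≤ B ∧ ∀ {η : ℝ} {θ : ℝ → ℝ}, 0 < η → η ≤ 1 → IsStripCutoff N C₀ η θ →
      ScaleBound N B η (1 - stripCutoff θ : E × E → ℝ) := by
  obtain ⟨K, hK, h⟩ := exists_scaleBound_comp_norm_sq E N
  refine ⟨1 + K * max 1 C₀, by positivity, fun {η θ} hη hη1 hθ ↦ ScaleBound.one_sub ?_ hη⟩
  refine (h hη hη1 (hθ.scaleBound hη) fun s hs ↦ hθ.eq_zero s ?_).comp_clm norm_halfDiff_le_one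
  linarith [le_abs_self s]

theorem exists_wBound_one_sub_stripCutoff_mul (E : Type*) [NormedAddCommGroup E]
    [InnerProductSpace ℝ E] [FiniteDimensional ℝ E] [Nontrivial E] [MeasurableSpace E]
    [BorelSpace E] (N : ℕ) (C₀ : ℝ) :
    ∃ D : ℝ, 0 ≤ D ∧ ∀ {η A : ℝ} {θ : ℝ → ℝ} {Φ : E × E → ℝ} {k l : ℕ}, 0 < η → η ≤ 1 →
      IsStripCutoff N C₀ η θ → WBound k A Φ → VanishesOffStrip Φ → l ≤ k → k ≤ N →
      WBound l (D * η ^ (k - l) * A) ((1 - stripCutoff θ) * Φ) := by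
  obtain ⟨B, hB, h⟩ := exists_scaleBound_one_sub_stripCutoff E N C₀
  exact ⟨2 ^ (N + 1) * B * 10 ^ (2 * N), by positivity,
    fun hη hη1 hθ hΦ hΦ0 hlk hkN ↦ hΦ.cutoff_mul (h hη hη1 hθ) hη hη1 (by norm_num)
      (hθ.tsupport_one_sub_stripCutoff_subset_thickening hη hΦ0) hlk hkN⟩

theorem WBound.of_one_sub_mul {V : Type*} [NormedAddCommGroup V] [NormedSpace ℝ V]
    [MeasurableSpace V] {k : ℕ} {A D : ℝ} {Φ χ : V → ℝ} (hΦ : WBound k A Φ)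
    (hχ : WBound k (D * A) ((1 - χ) * Φ)) : WBound k ((1 + D) * A) (χ * Φ) := by
  have h := hΦ.sub hχ
  rwa [sub_mul, one_mul, sub_sub_cancel, ← one_add_mul] at h

namespace IsMollifier

variable {E : Type*} [NormedAddCommGroup E] [InnerProductSpace ℝ E] [FiniteDimensional ℝ E]
  [MeasurableSpace E] [BorelSpace E] {μ : Measure (E × E)} [μ.IsAddHaarMeasure]
  {N k l : ℕ} {A C₀ D K η : ℝ} {θ : ℝ → ℝ} {Φ R χ : E × E → ℝ}

theorem vanishesOffStrip_mollify (hR : IsMollifier μ R) (hη : 0 < η) (hη1 : η < 1)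
    (hθ : IsStripCutoff N C₀ η θ) :
    VanishesOffStrip (mollify μ R (stripChange E hη.ne') (stripCutoff θ * Φ)) := by
  refine fun p hp ↦ norm_le_zero_iff.1 (hR.norm_integral_smul_le fun z hz ↦ ?_)
  have hθz : stripCutoff θ (p - stripChange E hη.ne' z) = 0 := by
    refine hθ.eq_zero _ ?_
    have hp1 := one_lt_norm_halfDiff_iff.2 hp
    have hsub := norm_sub_norm_le (halfDiff E p) (η • z.2)
    have hz2 := (norm_snd_le z).trans hz
    rw [norm_smul, Real.norm_of_nonneg hη.le] at hsub
    rw [map_sub, halfDiff_stripChange, abs_of_nonneg (by positivity)]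
    have hlt : 1 - η < ‖halfDiff E p - η • z.2‖ := by nlinarith
    nlinarith
  simp [hθz]

theorem wBound_mollify_stripChange (hR : IsMollifier μ R) (hη : 0 < η) (hη1 : η ≤ 1)
    (hK : ∀ j ≤ l, ∫ z, ‖iteratedFDeriv ℝ j R z‖ ∂μ ≤ K) (hkl : k ≤ l) (hΦ : WBound k A Φ)
    (hχ : WBound k (D * A) ((1 - χ) * Φ)) :
    WBound l (K * (1 + D) * (η ^ (l - k))⁻¹ * A)
      (mollify μ R (stripChange E hη.ne') (χ * Φ)) := by
  have h := hR.wBound_mollify (i := l - k) (fun j hj ↦ hK j (by omega))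
    (norm_stripChange_symm_le hη) ((one_le_inv₀ hη).2 hη1) (hΦ.of_one_sub_mul hχ)
  rw [Nat.add_sub_cancel' hkl] at h
  refine h.mono (le_of_eq ?_)
  rw [inv_pow]
  ring

theorem wBound_sub_mollify_stripChange (hR : IsMollifier μ R) (hη : 0 < η) (hD : 0 ≤ D)
    (hlk : l ≤ k) (hkl : k - l ≤ 2) (hΦ : WBound k A Φ)
    (hχk : WBound k (D * A) ((1 - χ) * Φ))
    (hχl : WBound l (D * η ^ (k - l) * A) ((1 - χ) * Φ)) :
    WBound l (9 * (1 + D) * η ^ (k - l) * A)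
      (Φ - mollify μ R (stripChange E hη.ne') (χ * Φ)) := by
  have hA := hΦ.nonneg
  obtain ⟨i, rfl⟩ := Nat.exists_eq_add_of_le hlk
  rw [Nat.add_sub_cancel_left] at *
  have h := hχl.add (hR.wBound_sub_mollify (norm_stripChange_le hη) hkl (hΦ.of_one_sub_mul hχk))
  rw [sub_mul, one_mul, sub_add_sub_cancel] at h
  refine h.mono ?_
  calc D * η ^ i * A + 2 * ((1 + D) * A * (2 * η) ^ i)
      = (D + 2 * (1 + D) * 2 ^ i) * η ^ i * A := by ring
    _ ≤ (D + 2 * (1 + D) * 2 ^ 2) * η ^ i * A := by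
      gcongr
      exact one_le_two
    _ ≤ 9 * (1 + D) * η ^ i * A := by
      gcongr
      linarith

end IsMollifier

end StripMollify

section StripSmoothing

theorem integral_mul_rescale_eq {E : Type*} [NormedAddCommGroup E] [NormedSpace ℝ E]
    [FiniteDimensional ℝ E] [MeasurableSpace E] [BorelSpace E] (μ : Measure E)
    [μ.IsAddHaarMeasure] {η : ℝ} (hη : 0 < η) (f ρ : E → ℝ) (a : E) :
    ∫ x, f x * ((η ^ Module.finrank ℝ E)⁻¹ * ρ (η⁻¹ • (a - x))) ∂μ =
      ∫ z, f (a - η • z) * ρ z ∂μ := by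
  have h := Measure.integral_comp_inv_smul_of_nonneg μ
    (fun z ↦ f (a - η • z) * ((η ^ Module.finrank ℝ E)⁻¹ * ρ z)) hη.le
  simp only [smul_inv_smul₀ hη.ne'] at h
  rw [← integral_sub_left_eq_self _ μ a]
  simp only [sub_sub_cancel]
  rw [h, smul_eq_mul, ← integral_const_mul]
  refine integral_congr_ae (.of_forall fun z ↦ ?_)
  field

variable {d : ℕ} {ρ : EuclideanSpace ℝ (Fin d) → ℝ} {θ : ℝ → ℝ} {η A : ℝ} {k : ℕ}
  {Φ : EuclideanSpace ℝ (Fin d) × EuclideanSpace ℝ (Fin d) → ℝ}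

theorem stripSmoothing_eq_integral (hη : 0 < η)
    (p : EuclideanSpace ℝ (Fin d) × EuclideanSpace ℝ (Fin d)) :
    stripSmoothing ρ θ η Φ p =
      ∫ x, ∫ y, ρ x * ρ y * (stripCutoff θ * Φ : _ × _ → ℝ) (p - stripChange _ hη.ne' (x, y)) := by
  have hsubst := integral_mul_rescale_eq (volume : Measure (EuclideanSpace ℝ (Fin d))) hη
  simp only [finrank_euclideanSpace_fin] at hsubst
  have hcut (u w : EuclideanSpace ℝ (Fin d)) :
      Φ (u + w, u - w) * θ (‖w‖ ^ 2) = (stripCutoff θ * Φ : _ × _ → ℝ) (u + w, u - w) := by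
    rw [Pi.mul_apply, stripCutoff, halfDiff_add_sub, mul_comm]
  generalize stripCutoff θ * Φ = G at *
  let a : EuclideanSpace ℝ (Fin d) := (2 : ℝ)⁻¹ • (p.1 + p.2)
  let b : EuclideanSpace ℝ (Fin d) := (2 : ℝ)⁻¹ • (p.1 - p.2)
  calc stripSmoothing ρ θ η Φ p
      = ∫ u, (∫ y, G (u + (b - η • y), u - (b - η • y)) * ρ y) *
          ((η ^ d)⁻¹ * ρ (η⁻¹ • (a - u))) := by
        refine integral_congr_ae (.of_forall fun u ↦ ?_)
        simp only [hcut]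
        rw [hsubst (fun w ↦ G (u + w, u - w) * _), ← integral_mul_const]
        exact integral_congr_ae (.of_forall fun y ↦ mul_right_comm _ _ _)
    _ = ∫ x, (∫ y, G (a - η • x + (b - η • y), a - η • x - (b - η • y)) * ρ y) * ρ x := hsubst _ _ _
    _ = _ := by
        refine integral_congr_ae (.of_forall fun x ↦ ?_)
        simp only [← integral_mul_const]
        refine integral_congr_ae (.of_forall fun y ↦ ?_)
        have hpoint : (a - η • x + (b - η • y), a - η • x - (b - η • y)) =
            p - stripChange _ hη.ne' (x, y) := by
          rw [stripChange_apply]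
          ext1 <;> simp only [a, b, Prod.fst_sub, Prod.snd_sub] <;> module
        simp only [hpoint]
        ring

theorem stripSmoothing_eq_mollify (hρ : IsMollifier volume ρ) (hη : 0 < η)
    (hΦ : WBound k A (stripCutoff θ * Φ)) :
    stripSmoothing ρ θ η Φ = mollify (volume.prod volume) (fun z ↦ ρ z.1 * ρ z.2)
      (stripChange _ hη.ne') (stripCutoff θ * Φ) := by
  funext p
  rw [stripSmoothing_eq_integral hη, mollify, integral_prod]
  · simp only [smul_eq_mul]
  · exact (hρ.prod hρ).integrable_smul_comp hΦ.measurable.stronglyMeasurable hΦ.abs_le p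

end StripSmoothing

theorem strip_smoothing_family_general {d : ℕ} (hd : 1 ≤ d) {ρ : EuclideanSpace ℝ (Fin d) → ℝ}
    (hρ : IsMollifier volume ρ) (N : ℕ) (C₀ : ℝ) :
    ∃ C : ℝ, 0 < C ∧ ∀ η : ℝ, 0 < η → η < 1 → ∀ θ : ℝ → ℝ, IsStripCutoff N C₀ η θ →
      (∀ (Φ : EuclideanSpace ℝ (Fin d) × EuclideanSpace ℝ (Fin d) → ℝ) (M : ℝ),
        WBound 0 M Φ → VanishesOffStrip Φ →
        ContDiff ℝ ∞ (stripSmoothing ρ θ η Φ) ∧ VanishesOffStrip (stripSmoothing ρ θ η Φ) ∧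
        ∃ A : ℝ, WBound N A (stripSmoothing ρ θ η Φ)) ∧
      (∀ k l : ℕ, k ≤ l → l ≤ N →
        ∀ (Φ : EuclideanSpace ℝ (Fin d) × EuclideanSpace ℝ (Fin d) → ℝ) (A : ℝ),
        WBound k A Φ → VanishesOffStrip Φ →
        WBound l (C * (η ^ (l - k))⁻¹ * A) (stripSmoothing ρ θ η Φ)) ∧
      (∀ k l : ℕ, l ≤ k → k ≤ N → k - l ≤ 2 →
        ∀ (Φ : EuclideanSpace ℝ (Fin d) × EuclideanSpace ℝ (Fin d) → ℝ) (A : ℝ),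
        WBound k A Φ → VanishesOffStrip Φ →
        WBound l (C * η ^ (k - l) * A) (fun p ↦ Φ p - stripSmoothing ρ θ η Φ p)) := by
  have : Nonempty (Fin d) := ⟨⟨0, hd⟩⟩
  have hR := hρ.prod hρ
  obtain ⟨D, hD, hcut⟩ :=
    exists_wBound_one_sub_stripCutoff_mul (EuclideanSpace ℝ (Fin d)) N C₀
  obtain ⟨K, hK0, hK⟩ := exists_le_forall_le_bound (fun j ↦ ∫ z, ‖iteratedFDeriv ℝ j
    (fun z : EuclideanSpace ℝ (Fin d) × EuclideanSpace ℝ (Fin d) ↦ ρ z.1 * ρ z.2) z‖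
    ∂volume.prod volume) 0 N
  refine ⟨(K + 9) * (1 + D), by positivity, fun η hη hη1 θ hθ ↦ ?_⟩
  have hcut₀ {k A} {Φ : EuclideanSpace ℝ (Fin d) × EuclideanSpace ℝ (Fin d) → ℝ} (hk : k ≤ N)
      (hΦ : WBound k A Φ) (h₀ : VanishesOffStrip Φ) :
      WBound k (D * A) ((1 - stripCutoff θ) * Φ) := by
    simpa using hcut hη hη1.le hθ hΦ h₀ le_rfl hk
  have hJ {k A Φ} (hk : k ≤ N) (hΦ : WBound k A Φ) (h₀ : VanishesOffStrip Φ) :=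
    stripSmoothing_eq_mollify hρ hη (hΦ.of_one_sub_mul (hcut₀ hk hΦ h₀))
  have hJ2 : ∀ k l : ℕ, k ≤ l → l ≤ N → ∀ Φ A, WBound k A Φ → VanishesOffStrip Φ →
      WBound l ((K + 9) * (1 + D) * (η ^ (l - k))⁻¹ * A) (stripSmoothing ρ θ η Φ) := by
    intro k l hkl hlN Φ A hΦ h₀
    have hA := hΦ.nonneg
    have hkN := hkl.trans hlN
    rw [hJ hkN hΦ h₀]
    refine (hR.wBound_mollify_stripChange hη hη1.le (fun j hj ↦ hK j (hj.trans hlN)) hkl hΦ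
      (hcut₀ hkN hΦ h₀)).mono ?_
    gcongr
    linarith
  refine ⟨fun Φ M hΦ h₀ ↦ ⟨?_, ?_, _, hJ2 0 N N.zero_le le_rfl Φ M hΦ h₀⟩, hJ2, ?_⟩
  · have hcutΦ := hΦ.of_one_sub_mul (hcut₀ N.zero_le hΦ h₀)
    rw [hJ N.zero_le hΦ h₀]
    exact hR.contDiff_mollify hcutΦ.measurable.stronglyMeasurable hcutΦ.abs_le
  · rw [hJ N.zero_le hΦ h₀]
    exact hR.vanishesOffStrip_mollify hη hη1 hθ
  · intro k l hlk hkN hkl Φ A hΦ h₀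
    have hA := hΦ.nonneg
    rw [hJ hkN hΦ h₀]
    refine (hR.wBound_sub_mollify_stripChange hη hD hlk hkl hΦ (hcut₀ hkN hΦ h₀)
      (hcut hη hη1.le hθ hΦ h₀ hlk hkN)).mono ?_
    gcongr
    linarith

/-- **Smoothing family adapted to the strip `Ω = {|x−y| ≤ 2}`.**
With a standard mollifier `ρ` and cut-offs `θ_η` as in the cut-off lemma,
the operators `J_η` satisfy:
(J1) `J_ηΦ` is smooth, vanishes outside `Ω`, and lies in `F_3`;
(J2) `‖J_ηΦ‖_{W^{ℓ,∞}} ≤ C η^{−(ℓ−k)} ‖Φ‖_{W^{k,∞}}` for `k ≤ ℓ ≤ 3`, `ℓ−k ≤ 2`;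
(J3) `‖Φ − J_ηΦ‖_{W^{ℓ,∞}} ≤ C η^{k−ℓ} ‖Φ‖_{W^{k,∞}}` for `ℓ ≤ k ≤ 3`, `k−ℓ ≤ 2`;
with `C` depending only on `d`, `ρ` and `C₀`. -/
theorem strip_smoothing_family (d : ℕ) (hd : 1 ≤ d)
    (ρ : EuclideanSpace ℝ (Fin d) → ℝ)
    (hρ_smooth : ContDiff ℝ (⊤ : ℕ∞) ρ)
    (hρ_nonneg : ∀ x, 0 ≤ ρ x)
    (hρ_even : ∀ x, ρ (-x) = ρ x)
    (hρ_supp : ∀ x : EuclideanSpace ℝ (Fin d), 1 < ‖x‖ → ρ x = 0)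
    (hρ_int : ∫ x : EuclideanSpace ℝ (Fin d), ρ x = 1)
    (C₀ : ℝ) (hC₀ : 0 < C₀) :
    ∃ C : ℝ, 0 < C ∧ ∀ η : ℝ, 0 < η → η < 1 →
      ∀ θ : ℝ → ℝ, ContDiff ℝ (⊤ : ℕ∞) θ → HasCompactSupport θ →
        (∀ s, 0 ≤ θ s ∧ θ s ≤ 1) →
        (∀ s : ℝ, 1 - 2 * η ≤ |s| → θ s = 0) →
        (∀ s : ℝ, |s| ≤ 1 - 3 * η → θ s = 1) →
        (∀ j : ℕ, 1 ≤ j → j ≤ 3 → ∀ s, |iteratedDeriv j θ s| ≤ C₀ * (η ^ j)⁻¹) →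
        -- (J1)
        (∀ (Φ : EuclideanSpace ℝ (Fin d) × EuclideanSpace ℝ (Fin d) → ℝ) (M : ℝ),
          WBound 0 M Φ →
          (∀ p : EuclideanSpace ℝ (Fin d) × EuclideanSpace ℝ (Fin d),
            ¬ ‖p.1 - p.2‖ ≤ 2 → Φ p = 0) →
          ContDiff ℝ (⊤ : ℕ∞) (stripSmoothing ρ θ η Φ) ∧
          (∀ p : EuclideanSpace ℝ (Fin d) × EuclideanSpace ℝ (Fin d),
            ¬ ‖p.1 - p.2‖ ≤ 2 → stripSmoothing ρ θ η Φ p = 0) ∧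
          ∃ A : ℝ, WBound 3 A (stripSmoothing ρ θ η Φ)) ∧
        -- (J2)
        (∀ k l : ℕ, k ≤ l → l ≤ 3 → l - k ≤ 2 →
          ∀ (Φ : EuclideanSpace ℝ (Fin d) × EuclideanSpace ℝ (Fin d) → ℝ) (A : ℝ),
            WBound k A Φ →
            (∀ p : EuclideanSpace ℝ (Fin d) × EuclideanSpace ℝ (Fin d),
              ¬ ‖p.1 - p.2‖ ≤ 2 → Φ p = 0) →
            WBound l (C * (η ^ (l - k))⁻¹ * A) (stripSmoothing ρ θ η Φ)) ∧
        -- (J3)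
        (∀ k l : ℕ, l ≤ k → k ≤ 3 → k - l ≤ 2 →
          ∀ (Φ : EuclideanSpace ℝ (Fin d) × EuclideanSpace ℝ (Fin d) → ℝ) (A : ℝ),
            WBound k A Φ →
            (∀ p : EuclideanSpace ℝ (Fin d) × EuclideanSpace ℝ (Fin d),
              ¬ ‖p.1 - p.2‖ ≤ 2 → Φ p = 0) →
            WBound l (C * η ^ (k - l) * A)
              (fun p => Φ p - stripSmoothing ρ θ η Φ p)) := by
  have hρ : IsMollifier volume ρ := ⟨hρ_smooth, hρ_nonneg, hρ_even, hρ_supp, hρ_int⟩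
  obtain ⟨C, hC, h⟩ := strip_smoothing_family_general hd hρ 3 C₀
  refine ⟨C, hC, fun η hη hη1 θ hθ _ hθ01 hθ0 hθ1 hθb ↦ ?_⟩
  obtain ⟨hJ1, hJ2, hJ3⟩ := h η hη hη1 θ
    ⟨hθ, fun s ↦ abs_le.2 ⟨by linarith [hθ01 s], (hθ01 s).2⟩, hθ0, hθ1, hθb⟩
  exact ⟨hJ1, fun k l hkl hl _ ↦ hJ2 k l hkl hl, hJ3⟩
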